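/- Let γ : [0, 2π] → ℝ² be a C¹ simple closed curve (γ(0) = γ(2π), γ injective on [0, 2π), γ' nonvanishing), and let Ω be the bounded open region enclosed by γ. Then the double contour integral of the logarithmic kernel satisfies ∫₀^{2π} ∫₀^{2π} log ‖γ(s) − γ(t)‖ · ⟨γ'(s), γ'(t)⟩ ds dt = −2π · area(Ω), where area(Ω) is the Lebesgue measure of Ω. (The integrand has an integrable logarithmic singularity on the diagonal, so the double integral is absolutely convergent.) -/

import Mathlib

noncomputable section

open MeasureTheory Filter Set
open scoped RealInnerProductSpace Topology

abbrev E3 : Type := EuclideanSpace ℝ (Fin 3)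
abbrev E2 : Type := EuclideanSpace ℝ (Fin 2)

def mk3 (a b c : ℝ) : E3 := (EuclideanSpace.equiv (Fin 3) ℝ).symm ![a, b, c]

def e3 (i : Fin 3) : E3 := EuclideanSpace.single i 1

/-- `∂_j v_i` at `p`. -/
def pder (v : E3 → E3) (i j : Fin 3) (p : E3) : ℝ := fderiv ℝ v p (e3 j) i

def div3 (v : E3 → E3) (p : E3) : ℝ := ∑ i, pder v i i p

def curl3 (v : E3 → E3) (p : E3) : E3 :=
  mk3 (pder v 2 1 p - pder v 1 2 p) (pder v 0 2 p - pder v 2 0 p)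
    (pder v 1 0 p - pder v 0 1 p)

def lap3 (f : E3 → ℝ) (p : E3) : ℝ :=
  ∑ j, fderiv ℝ (fun x => fderiv ℝ f x (e3 j)) p (e3 j)

def IsTangentAt (S : Set E3) (p v : E3) : Prop :=
  ∃ γ : ℝ → E3, (∀ t, γ t ∈ S) ∧ γ 0 = p ∧ HasDerivAt γ v 0

def IsSurface (k : ℕ∞) (S : Set E3) : Prop :=
  ∀ p ∈ S, ∃ (f : E2 → E3) (U : Set E2) (V : Set E3),
    IsOpen U ∧ IsOpen V ∧ p ∈ V ∧ ContDiffOn ℝ k f U ∧ Set.InjOn f U ∧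
    f '' U = S ∩ V ∧ ∀ x ∈ U, Function.Injective (fderiv ℝ f x)

structure CVSBase (S Ωm Ωp : Set E3) (vm vp : E3 → E3) : Prop where
  openm : IsOpen Ωm
  openp : IsOpen Ωp
  disj : Disjoint Ωm Ωp
  disjm : Disjoint Ωm S
  disjp : Disjoint Ωp S
  clm : S ⊆ closure Ωm
  clp : S ⊆ closure Ωp
  smoothm : ∃ W, IsOpen W ∧ Ωm ∪ S ⊆ W ∧ ContDiffOn ℝ 1 vm W
  smoothp : ∃ W, IsOpen W ∧ Ωp ∪ S ⊆ W ∧ ContDiffOn ℝ 1 vp W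
  divm : ∀ p ∈ Ωm, div3 vm p = 0
  divp : ∀ p ∈ Ωp, div3 vp p = 0
  curlm : ∀ p ∈ Ωm, curl3 vm p = 0
  curlp : ∀ p ∈ Ωp, curl3 vp p = 0
  tangentm : ∀ p ∈ S, IsTangentAt S p (vm p)
  tangentp : ∀ p ∈ S, IsTangentAt S p (vp p)

structure CVSPair (S Ωm Ωp : Set E3) (vm vp : E3 → E3)
    extends CVSBase S Ωm Ωp vm vp : Prop where
  strain : ∀ p ∈ S, (fderiv ℝ vp p + fderiv ℝ vm p) (vp p - vm p) = 0
  bernoulli : ∀ p ∈ S, ∀ᶠ q in 𝓝[S] p,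
    ‖vp q‖ ^ 2 - ‖vm q‖ ^ 2 = ‖vp p‖ ^ 2 - ‖vm p‖ ^ 2

/-- the open region `Ωm` is the bounded region enclosed by the closed surface `S`,
and `Ωp` is its exterior. -/
structure EnclosedBy (S Ωm Ωp : Set E3) : Prop where
  openm : IsOpen Ωm
  bounded : Bornology.IsBounded Ωm
  fr : frontier Ωm = S
  plus : Ωp = (Ωm ∪ S)ᶜ

def cr (a b : ℝ × ℝ) : ℝ := a.1 * b.2 - a.2 * b.1

lemma rect_ftc (f : ℝ × ℝ → ℝ) (hf : ContDiff ℝ 1 f) (A : ℝ) (B : ℝ → ℝ) (hB : Continuous B)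
    (a b c d : ℝ) (hab : a ≤ b) (hcd : c ≤ d)
    (h0 : ∀ s ∈ Icc c d, f (a, s) = 0) (h1 : ∀ s ∈ Icc c d, f (b, s) = 0) :
    ∫ p in Ioo a b ×ˢ Ioo c d, (A * fderiv ℝ f p (1, 0) + B p.1 * fderiv ℝ f p (0, 1))
      = ∫ t in a..b, B t * (f (t, d) - f (t, c)) := by
  have hfd : Continuous (fderiv ℝ f) := hf.continuous_fderiv (by norm_num)
  have hc1 : Continuous fun p => fderiv ℝ f p (1, 0) := hfd.clm_apply continuous_const
  have hc2 : Continuous fun p => fderiv ℝ f p (0, 1) := hfd.clm_apply continuous_const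
  have hgint : ∀ g : ℝ × ℝ → ℝ, Continuous g → IntegrableOn g (Ioo a b ×ˢ Ioo c d) := by
    intro g hg
    have : IntegrableOn g (Icc a b ×ˢ Icc c d) :=
      hg.continuousOn.integrableOn_compact (isCompact_Icc.prod isCompact_Icc)
    exact this.mono_set (prod_mono Ioo_subset_Icc_self Ioo_subset_Icc_self)
  have hdf : ∀ p, HasFDerivAt f (fderiv ℝ f p) p := fun p =>
    ((hf.differentiable (by norm_num)) p).hasFDerivAt
  rw [integral_add (hgint _ (by fun_prop)) (hgint _ (by fun_prop))]
  have e1 : ∫ p in Ioo a b ×ˢ Ioo c d, A * fderiv ℝ f p (1, 0) = 0 := by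
    rw [integral_const_mul]
    have hi := hgint _ hc1
    rw [Measure.volume_eq_prod] at hi ⊢
    rw [IntegrableOn, ← Measure.prod_restrict] at hi
    rw [← Measure.prod_restrict, integral_prod_symm _ hi]
    have : ∀ s ∈ Ioo c d, ∫ t in Ioo a b, fderiv ℝ f (t, s) (1, 0) = 0 := by
      intro s hs
      rw [← integral_Ioc_eq_integral_Ioo, ← intervalIntegral.integral_of_le hab]
      rw [intervalIntegral.integral_eq_sub_of_hasDerivAt (f := fun t => f (t, s))]
      · rw [h0 s (Ioo_subset_Icc_self hs), h1 s (Ioo_subset_Icc_self hs), sub_zero]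
      · intro t _
        have := (hdf (t, s)).comp_hasDerivAt t ((hasDerivAt_id t).prodMk (hasDerivAt_const t s))
        exact this
      · exact (hc1.comp (by fun_prop : Continuous fun t : ℝ => (t, s))).intervalIntegrable _ _
    rw [setIntegral_congr_fun measurableSet_Ioo this]; simp
  have e2 : ∫ p in Ioo a b ×ˢ Ioo c d, B p.1 * fderiv ℝ f p (0, 1)
      = ∫ t in a..b, B t * (f (t, d) - f (t, c)) := by
    have hi := hgint (fun p => B p.1 * fderiv ℝ f p (0, 1)) (by fun_prop)
    rw [Measure.volume_eq_prod] at hi ⊢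
    rw [setIntegral_prod _ hi, intervalIntegral.integral_of_le hab, integral_Ioc_eq_integral_Ioo]
    refine setIntegral_congr_fun measurableSet_Ioo fun t ht => ?_
    simp only
    rw [integral_const_mul, ← integral_Ioc_eq_integral_Ioo, ← intervalIntegral.integral_of_le hcd,
      intervalIntegral.integral_eq_sub_of_hasDerivAt (f := fun s => f (t, s))]
    · intro s _
      exact (hdf (t, s)).comp_hasDerivAt s ((hasDerivAt_const s t).prodMk (hasDerivAt_id s))
    · exact (hc2.comp (by fun_prop : Continuous fun s : ℝ => (t, s))).intervalIntegrable _ _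
  rw [e1, e2, zero_add]

noncomputable def PhiD (u n : ℝ × ℝ) : ℝ × ℝ →L[ℝ] ℝ × ℝ :=
  LinearMap.toContinuousLinearMap
    (Matrix.toLin (.finTwoProd ℝ) (.finTwoProd ℝ) !![u.1, n.1; u.2, n.2])

lemma PhiD_apply (u n q : ℝ × ℝ) : PhiD u n q = q.1 • u + q.2 • n := by
  rw [PhiD, Matrix.toLin_finTwoProd_toContinuousLinearMap]
  ext <;> simp <;> ring

lemma PhiD_det (u n : ℝ × ℝ) : (PhiD u n).det = cr u n := by
  rw [PhiD]
  simp only [LinearMap.det_toContinuousLinearMap, LinearMap.det_toLin,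
    Matrix.det_fin_two_of, cr]
  ring

lemma hasFDerivAt_Phi (γ : ℝ → ℝ × ℝ) (hγ : ContDiff ℝ 1 γ) (n : ℝ × ℝ) (q : ℝ × ℝ) :
    HasFDerivAt (fun q : ℝ × ℝ => γ q.1 + q.2 • n) (PhiD (deriv γ q.1) n) q := by
  have h1 : HasFDerivAt (fun q : ℝ × ℝ => γ q.1) _ q :=
    ((hγ.differentiable (by norm_num)) q.1).hasDerivAt.hasFDerivAt.comp q
      (hasFDerivAt_fst (𝕜 := ℝ) (p := q))
  have h2 : HasFDerivAt (fun q : ℝ × ℝ => q.2 • n) _ q :=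
    (hasFDerivAt_snd (𝕜 := ℝ) (p := q)).smul_const n
  refine (h1.add h2).congr_fderiv ?_
  ext1 <;> ext <;> simp [PhiD_apply]

lemma curve_far {T : ℝ} (γ : ℝ → ℝ × ℝ) (hγ : Continuous γ)
    (hclosed : γ 0 = γ T) (hinj : InjOn γ (Ico 0 T))
    {t0 : ℝ} (ht0 : t0 ∈ Ioo 0 T) {δ : ℝ} (hδ : 0 < δ) :
    ∃ V : Set (ℝ × ℝ), IsOpen V ∧ γ t0 ∈ V ∧ ∀ t ∈ Icc 0 T, γ t ∈ V → t ∈ Metric.ball t0 δ := by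
  refine ⟨(γ '' (Icc 0 T \ Metric.ball t0 δ))ᶜ, ?_, ?_, ?_⟩
  · exact ((isCompact_Icc.diff Metric.isOpen_ball).image hγ).isClosed.isOpen_compl
  · rintro ⟨t, ⟨ht, htb⟩, h⟩
    have hT : 0 < T := ht0.1.trans ht0.2
    rcases ht.2.lt_or_eq with h' | h'
    · have := hinj ⟨ht.1, h'⟩ ⟨ht0.1.le, ht0.2⟩ h
      exact htb (this ▸ Metric.mem_ball_self hδ)
    · rw [h', ← hclosed] at h
      have := hinj ⟨le_rfl, hT⟩ ⟨ht0.1.le, ht0.2⟩ h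
      exact ht0.1.ne this
  · intro t ht hV
    by_contra hb
    exact hV ⟨t, ⟨ht, hb⟩, rfl⟩

lemma cr_continuous {u : ℝ → ℝ × ℝ} (hu : Continuous u) (n : ℝ × ℝ) :
    Continuous fun t => cr (u t) n := by
  unfold cr; fun_prop

lemma local_chart {T : ℝ} (γ : ℝ → ℝ × ℝ) (hγ : ContDiff ℝ 1 γ)
    (hclosed : γ 0 = γ T) (hinj : InjOn γ (Ico 0 T))
    {t0 : ℝ} (ht0 : t0 ∈ Ioo 0 T) (hreg : deriv γ t0 ≠ 0) :
    ∃ n : ℝ × ℝ, ∃ r > 0, InjOn (fun q : ℝ × ℝ => γ q.1 + q.2 • n) (Metric.closedBall (t0, 0) r) ∧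
      (∀ t ∈ Icc (t0 - r) (t0 + r), 0 < cr (deriv γ t) n ∧ t ∈ Ioo 0 T) ∧
      IsOpen ((fun q : ℝ × ℝ => γ q.1 + q.2 • n) '' (Metric.ball (t0, 0) (r / 2))) ∧
      (∀ q ∈ Metric.closedBall ((t0, 0) : ℝ × ℝ) r, ∀ t' ∈ Icc 0 T, γ q.1 + q.2 • n = γ t' →
        q = (t', 0)) := by
  set n : ℝ × ℝ := (-(deriv γ t0).2, (deriv γ t0).1) with hn
  set Φ : ℝ × ℝ → ℝ × ℝ := fun q => γ q.1 + q.2 • n with hΦ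
  have hdc : Continuous (deriv γ) := hγ.continuous_deriv (by norm_num)
  have hpos : 0 < cr (deriv γ t0) n := by
    simp only [cr, hn]
    rcases eq_or_ne (deriv γ t0).1 0 with h | h
    · have h2 : (deriv γ t0).2 ≠ 0 := fun h2 => hreg (Prod.ext h h2)
      have := mul_self_pos.2 h2
      nlinarith [mul_self_nonneg (deriv γ t0).1]
    · have := mul_self_pos.2 h
      nlinarith [mul_self_nonneg (deriv γ t0).2]
  have hΦc : ContDiff ℝ 1 Φ := by fun_prop
  have hdet : (PhiD (deriv γ t0) n).det ≠ 0 := by rw [PhiD_det]; exact hpos.ne'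
  have hstrict : HasStrictFDerivAt Φ
      (((PhiD (deriv γ t0) n).toContinuousLinearEquivOfDetNeZero hdet : (ℝ × ℝ) ≃L[ℝ] (ℝ × ℝ)) :
        (ℝ × ℝ) →L[ℝ] (ℝ × ℝ)) (t0, 0) := by
    rw [ContinuousLinearMap.coe_toContinuousLinearEquivOfDetNeZero]
    exact hΦc.contDiffAt.hasStrictFDerivAt' (hasFDerivAt_Phi γ hγ n (t0, 0)) (by norm_num)
  set e := hstrict.toOpenPartialHomeomorph Φ with he
  have hsrc : e.source ∈ 𝓝 ((t0, 0) : ℝ × ℝ) :=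
    e.open_source.mem_nhds hstrict.mem_toOpenPartialHomeomorph_source
  have hcoe : (e : ℝ × ℝ → ℝ × ℝ) = Φ := hstrict.toOpenPartialHomeomorph_coe
  obtain ⟨δ, hδ, hδs⟩ := Metric.mem_nhds_iff.1 hsrc
  obtain ⟨V, hVo, hV0, hV⟩ := curve_far γ hγ.continuous hclosed hinj ht0 hδ
  have hVn : Φ ⁻¹' V ∈ 𝓝 ((t0, 0) : ℝ × ℝ) := by
    apply hΦc.continuous.continuousAt.preimage_mem_nhds
    apply hVo.mem_nhds
    simpa [hΦ] using hV0
  have hgood : {q : ℝ × ℝ | 0 < cr (deriv γ q.1) n ∧ q.1 ∈ Ioo 0 T} ∈ 𝓝 ((t0, 0) : ℝ × ℝ) := by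
    have h1 : IsOpen {t : ℝ | 0 < cr (deriv γ t) n ∧ t ∈ Ioo 0 T} :=
      (isOpen_lt continuous_const (cr_continuous hdc n)).inter isOpen_Ioo
    exact (h1.preimage continuous_fst).mem_nhds ⟨hpos, ht0⟩
  obtain ⟨r, hr, hrs⟩ := Metric.nhds_basis_closedBall.mem_iff.1
    (inter_mem (inter_mem hsrc hVn) hgood)
  refine ⟨n, r, hr, ?_, ?_, ?_, ?_⟩
  · have := e.injOn
    rw [hcoe] at this
    exact this.mono fun q hq => (hrs hq).1.1
  · intro t ht
    refine (hrs (a := (t, 0)) ?_).2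
    rw [← closedBall_prod_same, Real.closedBall_eq_Icc]
    exact ⟨ht, by simp [hr.le]⟩
  · have := e.isOpen_image_of_subset_source (s := Metric.ball (t0, 0) (r / 2)) Metric.isOpen_ball
      (fun q hq => (hrs (Metric.ball_subset_closedBall
        (Metric.ball_subset_ball (by linarith) hq))).1.1)
    rw [hcoe] at this
    exact this
  · intro q hq t' ht' h
    have h1 := hV t' ht' (h ▸ (hrs hq).1.2)
    have h2 : ((t', 0) : ℝ × ℝ) ∈ e.source := by
      apply hδs
      rw [← ball_prod_same]
      exact ⟨h1, by simp [hδ]⟩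
    have := e.injOn
    rw [hcoe] at this
    refine this (hrs hq).1.1 h2 ?_
    simpa [hΦ] using h

lemma preconn_dichotomy {X : Type*} [TopologicalSpace X] {S Ω : Set X} (hS : IsPreconnected S)
    (ho : IsOpen Ω) (hd : Disjoint S (frontier Ω)) : S ⊆ Ω ∨ S ∩ Ω = ∅ := by
  by_cases h : (S ∩ Ω).Nonempty
  · left
    have h2 : S ⊆ Ω ∪ (closure Ω)ᶜ := by
      intro x hx
      by_contra hc
      simp only [mem_union, mem_compl_iff, not_or, not_not] at hc
      exact disjoint_left.1 hd hx ⟨hc.2, by rw [ho.interior_eq]; exact hc.1⟩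
    apply hS.subset_left_of_subset_union ho isClosed_closure.isOpen_compl _ h2 h
    exact disjoint_compl_right.mono_left subset_closure |>.symm.symm
  · right
    exact not_nonempty_iff_eq_empty.1 h

def Hold (T : ℝ) (γ : ℝ → ℝ × ℝ) (Ω : Set (ℝ × ℝ)) (j : ℝ) (φ : ℝ × ℝ → ℝ) : Prop :=
  ∀ v : ℝ × ℝ, ∫ x in Ω, fderiv ℝ φ x v = j * ∫ t in (0:ℝ)..T, φ (γ t) * cr (deriv γ t) v

def Good (T : ℝ) (γ : ℝ → ℝ × ℝ) (Ω : Set (ℝ × ℝ)) (j : ℝ) (p : ℝ × ℝ) : Prop :=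
  ∃ U : Set (ℝ × ℝ), IsOpen U ∧ p ∈ U ∧ ∀ φ : ℝ × ℝ → ℝ, ContDiff ℝ 1 φ → HasCompactSupport φ →
    tsupport φ ⊆ U → Hold T γ Ω j φ

lemma local_green {T : ℝ} (γ : ℝ → ℝ × ℝ) (hγ : ContDiff ℝ 1 γ)
    (hclosed : γ 0 = γ T) (hinj : InjOn γ (Ico 0 T))
    (Ω : Set (ℝ × ℝ)) (hΩo : IsOpen Ω) (hfr : frontier Ω = γ '' Icc 0 T)
    {t0 : ℝ} (ht0 : t0 ∈ Ioo 0 T) (hreg : deriv γ t0 ≠ 0) :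
    ∃ j : ℝ, (j = -1 ∨ j = 0 ∨ j = 1) ∧ Good T γ Ω j (γ t0) := by
  obtain ⟨n, r, hr, hΦinj, hI, hUo, hΓ⟩ := local_chart γ hγ hclosed hinj ht0 hreg
  set Φ : ℝ × ℝ → ℝ × ℝ := fun q => γ q.1 + q.2 • n with hΦ
  have hdc : Continuous (deriv γ) := hγ.continuous_deriv (by norm_num)
  have hΦc : ContDiff ℝ 1 Φ := by fun_prop
  set Qp : Set (ℝ × ℝ) := Ioo (t0 - r) (t0 + r) ×ˢ Ioo 0 r with hQp
  set Qm : Set (ℝ × ℝ) := Ioo (t0 - r) (t0 + r) ×ˢ Ioo (-r) 0 with hQm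
  have hball : Metric.ball ((t0, 0) : ℝ × ℝ) r = Ioo (t0 - r) (t0 + r) ×ˢ Ioo (-r) r := by
    rw [← ball_prod_same, Real.ball_eq_Ioo, Real.ball_eq_Ioo]; simp
  have hcball : Metric.closedBall ((t0, 0) : ℝ × ℝ) r = Icc (t0 - r) (t0 + r) ×ˢ Icc (-r) r := by
    rw [← closedBall_prod_same, Real.closedBall_eq_Icc, Real.closedBall_eq_Icc]; simp
  have hball2 : Metric.ball ((t0, 0) : ℝ × ℝ) (r / 2) =
      Ioo (t0 - r / 2) (t0 + r / 2) ×ˢ Ioo (-(r / 2)) (r / 2) := by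
    rw [← ball_prod_same, Real.ball_eq_Ioo, Real.ball_eq_Ioo]; simp
  have hQpb : Qp ⊆ Metric.ball ((t0, 0) : ℝ × ℝ) r := by
    rw [hball]; exact prod_mono le_rfl (Ioo_subset_Ioo (by linarith) le_rfl)
  have hQmb : Qm ⊆ Metric.ball ((t0, 0) : ℝ × ℝ) r := by
    rw [hball]; exact prod_mono le_rfl (Ioo_subset_Ioo le_rfl (by linarith))
  have hnotin : ∀ q ∈ Metric.ball ((t0, 0) : ℝ × ℝ) r, q.2 ≠ 0 → Φ q ∉ frontier Ω := by
    intro q hq h2 h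
    rw [hfr] at h
    obtain ⟨t', ht', h⟩ := h
    have := hΓ q (Metric.ball_subset_closedBall hq) t' ht' h.symm
    rw [this] at h2; exact h2 rfl
  have hdich : ∀ Q ⊆ Metric.ball ((t0, 0) : ℝ × ℝ) r, IsPreconnected Q → (∀ q ∈ Q, q.2 ≠ 0) →
      Q ∩ Φ ⁻¹' Ω = Q ∨ Q ∩ Φ ⁻¹' Ω = ∅ := by
    intro Q hQ hpre h2
    have := preconn_dichotomy (hpre.image Φ hΦc.continuous.continuousOn) hΩo (by
      rw [disjoint_left]
      rintro _ ⟨q, hq, rfl⟩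
      exact hnotin q (hQ hq) (h2 q hq))
    rcases this with h | h
    · left
      exact inter_eq_left.2 (image_subset_iff.1 h)
    · right
      rw [← image_inter_preimage] at h
      exact image_eq_empty.1 h
  have hdp := hdich Qp hQpb (isPreconnected_Ioo.prod isPreconnected_Ioo) (fun q hq => hq.2.1.ne')
  have hdm := hdich Qm hQmb (isPreconnected_Ioo.prod isPreconnected_Ioo) (fun q hq => hq.2.2.ne)
  have hsplit : Metric.ball ((t0, 0) : ℝ × ℝ) r ∩ Φ ⁻¹' Ω = (Qp ∩ Φ ⁻¹' Ω) ∪ (Qm ∩ Φ ⁻¹' Ω) := by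
    apply Subset.antisymm
    · rintro q ⟨hq, hqΩ⟩
      have hq' := hq
      rw [hball] at hq
      rcases lt_trichotomy q.2 0 with h | h | h
      · right; exact ⟨⟨hq.1, hq.2.1, h⟩, hqΩ⟩
      · exfalso
        have h1 : Φ q ∈ frontier Ω := by
          rw [hfr]
          refine ⟨q.1, Ioo_subset_Icc_self (hI q.1 (Ioo_subset_Icc_self hq.1)).2, ?_⟩
          simp [hΦ, h]
        rw [hΩo.frontier_eq] at h1
        exact h1.2 hqΩ
      · left; exact ⟨⟨hq.1, h, hq.2.2⟩, hqΩ⟩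
    · rw [← union_inter_distrib_right]
      exact inter_subset_inter_left _ (union_subset hQpb hQmb)
  have hmeasΩ : MeasurableSet (Φ ⁻¹' Ω) := (hΩo.preimage hΦc.continuous).measurableSet
  have hmp : MeasurableSet Qp := (isOpen_Ioo.prod isOpen_Ioo).measurableSet
  have hmm : MeasurableSet Qm := (isOpen_Ioo.prod isOpen_Ioo).measurableSet
  -- main computation
  have key : ∀ φ : ℝ × ℝ → ℝ, ContDiff ℝ 1 φ → HasCompactSupport φ →
    tsupport φ ⊆ Φ '' (Metric.ball (t0, 0) (r / 2)) → ∀ v : ℝ × ℝ, ∃ F : ℝ × ℝ → ℝ,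
      ∫ x in Ω, fderiv ℝ φ x v = (∫ q in Qp ∩ Φ ⁻¹' Ω, F q) + (∫ q in Qm ∩ Φ ⁻¹' Ω, F q) ∧
      (∫ q in Qp, F q = - ∫ t in (0:ℝ)..T, φ (γ t) * cr (deriv γ t) v) ∧
      (∫ q in Qm, F q = ∫ t in (0:ℝ)..T, φ (γ t) * cr (deriv γ t) v) := by
    intro φ hφ hφc hφs v
    set f : ℝ × ℝ → ℝ := φ ∘ Φ with hf
    have hfC : ContDiff ℝ 1 f := hφ.comp hΦc
    have hfd : ∀ q w, fderiv ℝ f q w = fderiv ℝ φ (Φ q) (PhiD (deriv γ q.1) n w) := by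
      intro q w
      have := ((hφ.differentiable (by norm_num)) (Φ q)).hasFDerivAt.comp q
        (hasFDerivAt_Phi γ hγ n q)
      rw [this.fderiv]; rfl
    have hf0 : ∀ q ∈ Metric.closedBall ((t0, 0) : ℝ × ℝ) r,
        q ∉ Metric.ball ((t0, 0) : ℝ × ℝ) (r / 2) → f q = 0 := by
      intro q hq hq2
      by_contra h
      have : Φ q ∈ tsupport φ := subset_tsupport _ h
      obtain ⟨q', hq', h'⟩ := hφs this
      have := hΦinj (Metric.ball_subset_closedBall
        (Metric.ball_subset_ball (by linarith) hq')) hq h'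
      exact hq2 (this ▸ hq')
    set B : ℝ → ℝ := fun t => cr (deriv γ t) v with hB
    have hBc : Continuous B := cr_continuous hdc v
    set F : ℝ × ℝ → ℝ := fun q => cr v n * fderiv ℝ f q (1, 0) + B q.1 * fderiv ℝ f q (0, 1) with hF
    have hFc : Continuous F := by
      have hfdc : Continuous (fderiv ℝ f) := hfC.continuous_fderiv (by norm_num)
      have hc1 : Continuous fun p => fderiv ℝ f p (1, 0) := hfdc.clm_apply continuous_const
      have hc2 : Continuous fun p => fderiv ℝ f p (0, 1) := hfdc.clm_apply continuous_const
      fun_prop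
    have hFi : IntegrableOn F (Metric.ball ((t0, 0) : ℝ × ℝ) r) :=
      (hFc.continuousOn.integrableOn_compact (isCompact_closedBall _ _)).mono_set
        Metric.ball_subset_closedBall
    -- boundary line integral
    have hline : ∫ t in (t0 - r)..(t0 + r), B t * f (t, 0) =
        ∫ t in (0:ℝ)..T, φ (γ t) * cr (deriv γ t) v := by
      have hT : (0:ℝ) ≤ T := (ht0.1.trans ht0.2).le
      rw [intervalIntegral.integral_of_le (by linarith), intervalIntegral.integral_of_le hT]
      have h1 : ∀ t, B t * f (t, 0) = φ (γ t) * cr (deriv γ t) v := by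
        intro t; simp [hB, hf, hΦ, mul_comm]
      simp_rw [h1]
      symm
      apply setIntegral_eq_of_subset_of_forall_sdiff_eq_zero measurableSet_Ioc
      · intro t ht
        exact Ioo_subset_Ioc_self (hI t (Ioc_subset_Icc_self ht)).2
      · rintro t ⟨ht, ht2⟩
        have : φ (γ t) = 0 := by
          by_contra h
          obtain ⟨q', hq', h'⟩ := hφs (subset_tsupport _ h)
          have := hΓ q' (Metric.ball_subset_closedBall
            (Metric.ball_subset_ball (by linarith) hq')) t (Ioc_subset_Icc_self ht) h'
          rw [this, hball2] at hq'
          exact ht2 ⟨by linarith [hq'.1.1], by linarith [hq'.1.2]⟩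
        rw [this, zero_mul]
    have hzero1 : ∀ s ∈ Icc (-r) r, f (t0 - r, s) = 0 := by
      intro s hs
      apply hf0
      · rw [hcball]; exact ⟨⟨le_rfl, by linarith⟩, hs⟩
      · rw [hball2]; intro h; linarith [h.1.1]
    have hzero2 : ∀ s ∈ Icc (-r) r, f (t0 + r, s) = 0 := by
      intro s hs
      apply hf0
      · rw [hcball]; exact ⟨⟨by linarith, le_rfl⟩, hs⟩
      · rw [hball2]; intro h; linarith [h.1.2]
    have htop : ∀ t ∈ Icc (t0 - r) (t0 + r), f (t, r) = 0 := by
      intro t ht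
      apply hf0
      · rw [hcball]; exact ⟨ht, by linarith, le_rfl⟩
      · rw [hball2]; intro h; linarith [h.2.2]
    have hbot : ∀ t ∈ Icc (t0 - r) (t0 + r), f (t, -r) = 0 := by
      intro t ht
      apply hf0
      · rw [hcball]; exact ⟨ht, le_rfl, by linarith⟩
      · rw [hball2]; intro h; linarith [h.2.1]
    refine ⟨F, ?_, ?_, ?_⟩
    · have h1 : ∫ x in Ω, fderiv ℝ φ x v =
          ∫ x in Φ '' (Metric.ball (t0, 0) r ∩ Φ ⁻¹' Ω), fderiv ℝ φ x v := by
        rw [image_inter_preimage]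
        apply setIntegral_eq_of_subset_of_forall_sdiff_eq_zero hΩo.measurableSet inter_subset_right
        rintro x ⟨hx, hx2⟩
        have : x ∉ tsupport (fderiv ℝ φ) := by
          intro h
          have h := hφs (tsupport_fderiv_subset ℝ h)
          exact hx2 ⟨image_mono (Metric.ball_subset_ball (by linarith)) h, hx⟩
        rw [image_eq_zero_of_notMem_tsupport this]; rfl
      rw [h1, integral_image_eq_integral_abs_det_fderiv_smul volume
        (Metric.isOpen_ball.measurableSet.inter hmeasΩ)
        (fun q _ => (hasFDerivAt_Phi γ hγ n q).hasFDerivWithinAt)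
        (hΦinj.mono (inter_subset_left.trans Metric.ball_subset_closedBall))]
      have h2 : ∫ q in Metric.ball (t0, 0) r ∩ Φ ⁻¹' Ω,
          |(PhiD (deriv γ q.1) n).det| • fderiv ℝ φ (Φ q) v =
          ∫ q in Metric.ball (t0, 0) r ∩ Φ ⁻¹' Ω, F q := by
        apply setIntegral_congr_fun (Metric.isOpen_ball.measurableSet.inter hmeasΩ)
        rintro q ⟨hq, -⟩
        rw [hball] at hq
        have hp := (hI q.1 (Ioo_subset_Icc_self hq.1)).1
        simp only [PhiD_det, abs_of_pos hp, hF, hfd, hB]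
        have hlin : cr (deriv γ q.1) n • v = cr v n • PhiD (deriv γ q.1) n (1, 0) +
            cr (deriv γ q.1) v • PhiD (deriv γ q.1) n (0, 1) := by
          rw [PhiD_apply, PhiD_apply]
          ext <;> simp [cr] <;> ring
        have := congrArg (fderiv ℝ φ (Φ q)) hlin
        rwa [map_add, map_smul, map_smul, map_smul, smul_eq_mul, smul_eq_mul] at this
      refine h2.trans ?_
      rw [hsplit]
      refine setIntegral_union ?_ (hmm.inter hmeasΩ) ?_ ?_
      · rw [disjoint_left]
        rintro q ⟨hq, -⟩ ⟨hq2, -⟩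
        exact lt_asymm hq.2.1 hq2.2.2
      · exact hFi.mono_set (inter_subset_left.trans hQpb)
      · exact hFi.mono_set (inter_subset_left.trans hQmb)
    · rw [rect_ftc f hfC _ B hBc _ _ _ _ (by linarith) hr.le
        (fun s hs => hzero1 s ⟨by linarith [hs.1], hs.2⟩)
        (fun s hs => hzero2 s ⟨by linarith [hs.1], hs.2⟩), ← hline, ← intervalIntegral.integral_neg]
      apply intervalIntegral.integral_congr
      intro t ht
      rw [uIcc_of_le (by linarith)] at ht
      simp only [htop t ht]; ring
    · rw [rect_ftc f hfC _ B hBc _ _ _ _ (by linarith) (by linarith)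
        (fun s hs => hzero1 s ⟨hs.1, by linarith [hs.2]⟩)
        (fun s hs => hzero2 s ⟨hs.1, by linarith [hs.2]⟩), ← hline]
      apply intervalIntegral.integral_congr
      intro t ht
      rw [uIcc_of_le (by linarith)] at ht
      simp only [hbot t ht]; ring
  have hmem : γ t0 ∈ Φ '' (Metric.ball (t0, 0) (r / 2)) :=
    ⟨(t0, 0), Metric.mem_ball_self (by linarith), by simp [hΦ]⟩
  rcases hdp with hdp | hdp <;> rcases hdm with hdm | hdm
  · refine ⟨0, by simp, _, hUo, hmem, fun φ h1 h2 h3 v => ?_⟩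
    obtain ⟨F, e1, e2, e3⟩ := key φ h1 h2 h3 v
    rw [e1, hdp, hdm, e2, e3]; ring
  · refine ⟨-1, by simp, _, hUo, hmem, fun φ h1 h2 h3 v => ?_⟩
    obtain ⟨F, e1, e2, e3⟩ := key φ h1 h2 h3 v
    rw [e1, hdp, hdm, e2]; simp
  · refine ⟨1, by simp, _, hUo, hmem, fun φ h1 h2 h3 v => ?_⟩
    obtain ⟨F, e1, e2, e3⟩ := key φ h1 h2 h3 v
    rw [e1, hdp, hdm, e3]; simp
  · refine ⟨0, by simp, _, hUo, hmem, fun φ h1 h2 h3 v => ?_⟩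
    obtain ⟨F, e1, e2, e3⟩ := key φ h1 h2 h3 v
    rw [e1, hdp, hdm]; simp

lemma good_unique {T : ℝ} (γ : ℝ → ℝ × ℝ) (hγ : ContDiff ℝ 1 γ)
    (hclosed : γ 0 = γ T) (hinj : InjOn γ (Ico 0 T))
    (Ω : Set (ℝ × ℝ))
    {t0 : ℝ} (ht0 : t0 ∈ Ioo 0 T) (hreg : deriv γ t0 ≠ 0) {j j' : ℝ}
    (h : Good T γ Ω j (γ t0)) (h' : Good T γ Ω j' (γ t0)) : j = j' := by
  obtain ⟨n, r, hr, -, hI, -, -⟩ := local_chart γ hγ hclosed hinj ht0 hreg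
  obtain ⟨V, hVo, hV0, hV⟩ := curve_far γ hγ.continuous hclosed hinj ht0 hr
  obtain ⟨U, hUo, hU0, hU⟩ := h
  obtain ⟨U', hUo', hU0', hU'⟩ := h'
  have hdc : Continuous (deriv γ) := hγ.continuous_deriv (by norm_num)
  obtain ⟨ε, hε, hεs⟩ := Metric.nhds_basis_closedBall.mem_iff.1
    (((hVo.inter hUo).inter hUo').mem_nhds ⟨⟨hV0, hU0⟩, hU0'⟩)
  let b : ContDiffBump (γ t0) := ⟨ε / 2, ε, by linarith, by linarith⟩
  have hts : tsupport b ⊆ Metric.closedBall (γ t0) ε := by rw [b.tsupport_eq]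
  have e1 := hU b b.contDiff b.hasCompactSupport (fun x hx => (hεs (hts hx)).1.2) n
  have e2 := hU' b b.contDiff b.hasCompactSupport (fun x hx => (hεs (hts hx)).2) n
  rw [e1] at e2
  refine mul_right_cancel₀ (ne_of_gt ?_) e2
  have hmain : ∀ t ∈ Icc 0 T, 0 ≤ b (γ t) * cr (deriv γ t) n := by
    intro t ht
    by_cases hb : b (γ t) = 0
    · rw [hb, zero_mul]
    · have h1 := hV t ht (hεs (hts (subset_tsupport _ hb))).1.1
      rw [Real.ball_eq_Ioo] at h1
      exact mul_nonneg b.nonneg (hI t (Ioo_subset_Icc_self h1)).1.le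
  refine intervalIntegral.integral_pos (ht0.1.trans ht0.2) ?_ ?_ ⟨t0, Ioo_subset_Icc_self ht0, ?_⟩
  · exact ((b.continuous.comp hγ.continuous).mul (cr_continuous hdc n)).continuousOn
  · intro t ht; exact hmain t (Ioc_subset_Icc_self ht)
  · exact mul_pos (b.pos_of_mem_ball (Metric.mem_ball_self hε))
      (hI t0 ⟨by linarith, by linarith⟩).1

lemma good_open {T : ℝ} {γ : ℝ → ℝ × ℝ} {Ω : Set (ℝ × ℝ)} {j : ℝ} :
    IsOpen {p | Good T γ Ω j p} := by
  rw [isOpen_iff_mem_nhds]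
  rintro p ⟨U, hUo, hp, hU⟩
  filter_upwards [hUo.mem_nhds hp] with q hq
  exact ⟨U, hUo, hq, hU⟩

lemma good_const {T : ℝ} (hT : 0 < T) (γ : ℝ → ℝ × ℝ) (hγ : ContDiff ℝ 1 γ)
    (hclosed : γ 0 = γ T) (hinj : InjOn γ (Ico 0 T))
    (Ω : Set (ℝ × ℝ)) (hΩo : IsOpen Ω) (hfr : frontier Ω = γ '' Icc 0 T)
    (hreg : ∀ t ∈ Icc 0 T, deriv γ t ≠ 0) :
    ∃ j : ℝ, (j = -1 ∨ j = 0 ∨ j = 1) ∧ ∀ t ∈ Ioo 0 T, Good T γ Ω j (γ t) := by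
  have hm : T / 2 ∈ Ioo 0 T := ⟨by linarith, by linarith⟩
  obtain ⟨j, hj, hg⟩ := local_green γ hγ hclosed hinj Ω hΩo hfr hm
    (hreg _ (Ioo_subset_Icc_self hm))
  refine ⟨j, hj, ?_⟩
  set A : Set ℝ := {t | Good T γ Ω j (γ t)}
  set B : Set ℝ := ⋃ i ∈ {i : ℝ | i ≠ j}, {t | Good T γ Ω i (γ t)}
  have hA : IsOpen A := good_open.preimage hγ.continuous
  have hB : IsOpen B := isOpen_biUnion fun i _ => good_open.preimage hγ.continuous
  by_contra hc
  push Not at hc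
  obtain ⟨t1, ht1, hn⟩ := hc
  have hcov : Ioo 0 T ⊆ A ∪ B := by
    intro t ht
    obtain ⟨i, -, hi⟩ := local_green γ hγ hclosed hinj Ω hΩo hfr ht
      (hreg _ (Ioo_subset_Icc_self ht))
    by_cases h : i = j
    · left; rw [h] at hi; exact hi
    · right; simp only [B, mem_iUnion]; exact ⟨i, h, hi⟩
  have hBn : (Ioo 0 T ∩ B).Nonempty := by
    refine ⟨t1, ht1, ?_⟩
    rcases hcov ht1 with h | h
    · exact absurd h hn
    · exact h
  obtain ⟨t, ht, h1, h2⟩ := isPreconnected_Ioo A B hA hB hcov ⟨T / 2, hm, hg⟩ hBn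
  simp only [B, mem_iUnion] at h2
  obtain ⟨i, hi, h2⟩ := h2
  exact hi (good_unique γ hγ hclosed hinj Ω ht (hreg _ (Ioo_subset_Icc_self ht)) h2 h1)

lemma good_interior {T : ℝ} (hT : 0 < T) (γ : ℝ → ℝ × ℝ)
    (Ω : Set (ℝ × ℝ)) (hΩo : IsOpen Ω) (hfr : frontier Ω = γ '' Icc 0 T) (j : ℝ)
    {p : ℝ × ℝ} (hp : p ∈ Ω) : Good T γ Ω j p := by
  refine ⟨Ω, hΩo, hp, fun φ hφ hφc hφs v => ?_⟩
  have hfdc : Continuous (fderiv ℝ φ) := hφ.continuous_fderiv (by norm_num)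
  have h1 : ∫ x in Ω, fderiv ℝ φ x v = 0 := by
    rw [setIntegral_eq_integral_of_forall_compl_eq_zero]
    · have := integral_mul_fderiv_eq_neg_fderiv_mul_of_integrable (μ := volume) (f := fun _ => (1:ℝ))
        (g := φ) (v := v) ?_ ?_ ?_ ?_ ?_
      · simpa using this
      · simp
      · simp only [one_mul]
        exact (hfdc.clm_apply continuous_const).integrable_of_hasCompactSupport
          (hφc.fderiv_apply ℝ v)
      · simpa using hφ.continuous.integrable_of_hasCompactSupport hφc
      · intro x _; fun_prop
      · intro x _; exact (hφ.differentiable (by norm_num)) x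
    · intro x hx
      have : x ∉ tsupport (fderiv ℝ φ) := fun h => hx (hφs (tsupport_fderiv_subset ℝ h))
      rw [image_eq_zero_of_notMem_tsupport this]; rfl
  have h2 : ∫ t in (0:ℝ)..T, φ (γ t) * cr (deriv γ t) v = 0 := by
    rw [intervalIntegral.integral_congr (g := fun _ => 0)]
    · simp
    · intro t ht
      rw [uIcc_of_le hT.le] at ht
      have h3 : γ t ∈ frontier Ω := by rw [hfr]; exact ⟨t, ht, rfl⟩
      rw [hΩo.frontier_eq] at h3
      have : φ (γ t) = 0 := image_eq_zero_of_notMem_tsupport fun h => h3.2 (hφs h)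
      simp [this]
  rw [h1, h2, mul_zero]

lemma hold_add {T : ℝ} (γ : ℝ → ℝ × ℝ) (hγ : ContDiff ℝ 1 γ)
    (Ω : Set (ℝ × ℝ)) (hΩb : Bornology.IsBounded Ω) (j : ℝ)
    {φ ψ : ℝ × ℝ → ℝ} (hφ : ContDiff ℝ 1 φ) (hψ : ContDiff ℝ 1 ψ)
    (h1 : Hold T γ Ω j φ) (h2 : Hold T γ Ω j ψ) : Hold T γ Ω j (fun x => φ x + ψ x) := by
  intro v
  have hdc : Continuous (deriv γ) := hγ.continuous_deriv (by norm_num)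
  have hi : ∀ g : ℝ × ℝ → ℝ, ContDiff ℝ 1 g → IntegrableOn (fun x => fderiv ℝ g x v) Ω := by
    intro g hg
    have hfdc : Continuous (fderiv ℝ g) := hg.continuous_fderiv (by norm_num)
    exact ((hfdc.clm_apply continuous_const).continuousOn.integrableOn_compact
      hΩb.isCompact_closure).mono_set subset_closure
  have hi2 : ∀ g : ℝ × ℝ → ℝ, ContDiff ℝ 1 g →
      IntervalIntegrable (fun t => g (γ t) * cr (deriv γ t) v) volume 0 T := by
    intro g hg
    exact ((hg.continuous.comp hγ.continuous).mul (cr_continuous hdc v)).intervalIntegrable _ _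
  have e : ∀ x, fderiv ℝ (fun x => φ x + ψ x) x v = fderiv ℝ φ x v + fderiv ℝ ψ x v := by
    intro x
    rw [fderiv_fun_add ((hφ.differentiable (by norm_num)) x) ((hψ.differentiable (by norm_num)) x)]
    rfl
  simp_rw [e, add_mul]
  rw [integral_add (hi φ hφ) (hi ψ hψ), intervalIntegral.integral_add (hi2 φ hφ) (hi2 ψ hψ),
    h1 v, h2 v]
  ring

lemma hold_of_cover {T : ℝ} (hT : 0 < T) (γ : ℝ → ℝ × ℝ) (hγ : ContDiff ℝ 1 γ)
    (Ω : Set (ℝ × ℝ)) (hΩb : Bornology.IsBounded Ω)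
    (hfr : frontier Ω = γ '' Icc 0 T) (j : ℝ)
    (b : ∀ p : ℝ × ℝ, ContDiffBump p)
    (S : Finset (ℝ × ℝ))
    (hb : ∀ p ∈ S, ∀ φ : ℝ × ℝ → ℝ, ContDiff ℝ 1 φ → HasCompactSupport φ →
      tsupport φ ⊆ tsupport (b p) → Hold T γ Ω j φ) :
    ∀ φ : ℝ × ℝ → ℝ, ContDiff ℝ 1 φ →
      tsupport φ ⊆ (closure Ω)ᶜ ∪ ⋃ p ∈ S, Metric.ball p (b p).rIn → Hold T γ Ω j φ := by
  classical
  induction S using Finset.induction_on with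
  | empty =>
    intro φ hφ hs v
    simp only [Finset.notMem_empty, iUnion_of_empty, iUnion_empty, union_empty] at hs
    have h1 : ∫ x in Ω, fderiv ℝ φ x v = 0 := by
      apply setIntegral_eq_zero_of_forall_eq_zero
      intro x hx
      have : x ∉ tsupport (fderiv ℝ φ) := fun h =>
        hs (tsupport_fderiv_subset ℝ h) (subset_closure hx)
      rw [image_eq_zero_of_notMem_tsupport this]; rfl
    have h2 : ∫ t in (0:ℝ)..T, φ (γ t) * cr (deriv γ t) v = 0 := by
      rw [intervalIntegral.integral_congr (g := fun _ => 0)]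
      · simp
      · intro t ht
        rw [uIcc_of_le hT.le] at ht
        have h3 : γ t ∈ frontier Ω := by rw [hfr]; exact ⟨t, ht, rfl⟩
        have : φ (γ t) = 0 := image_eq_zero_of_notMem_tsupport fun h =>
          hs h (frontier_subset_closure h3)
        simp [this]
    rw [h1, h2, mul_zero]
  | insert p S hp ih =>
    intro φ hφ hs
    have e : φ = fun x => (b p x * φ x) + ((1 - b p x) * φ x) := by ext x; ring
    have hb1 : ContDiff ℝ 1 (b p) := (b p).contDiff
    have c1 : ContDiff ℝ 1 (fun x => b p x * φ x) := hb1.mul hφ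
    have c2 : ContDiff ℝ 1 (fun x => (1 - b p x) * φ x) := (contDiff_const.sub hb1).mul hφ
    rw [e]
    refine hold_add γ hγ Ω hΩb j c1 c2 ?_ ?_
    · refine hb p (Finset.mem_insert_self _ _) _ c1 ?_ ?_
      · exact (b p).hasCompactSupport.mul_right
      · exact tsupport_mul_subset_left
    · refine ih (fun q hq => hb q (Finset.mem_insert_of_mem hq)) _ c2 ?_
      intro x hx
      have hx1 : x ∈ tsupport φ := tsupport_mul_subset_right hx
      have hx2 : x ∉ Metric.ball p (b p).rIn := by
        have hcl : IsClosed (Metric.ball p (b p).rIn)ᶜ := Metric.isOpen_ball.isClosed_compl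
        refine closure_minimal ?_ hcl hx
        intro y hy hyb
        apply hy
        simp [(b p).one_of_mem_closedBall (Metric.ball_subset_closedBall hyb)]
      rcases hs hx1 with h | h
      · left; exact h
      · right
        simp only [mem_iUnion] at h ⊢
        obtain ⟨q, hq, h⟩ := h
        rcases Finset.mem_insert.1 hq with rfl | hq
        · exact absurd h hx2
        · exact ⟨q, hq, h⟩

lemma hold_away {T : ℝ} (hT : 0 < T) (γ : ℝ → ℝ × ℝ) (hγ : ContDiff ℝ 1 γ)
    (hclosed : γ 0 = γ T)
    (Ω : Set (ℝ × ℝ)) (hΩo : IsOpen Ω) (hΩb : Bornology.IsBounded Ω)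
    (hfr : frontier Ω = γ '' Icc 0 T) (j : ℝ)
    (hg : ∀ t ∈ Ioo 0 T, Good T γ Ω j (γ t))
    (φ : ℝ × ℝ → ℝ) (hφ : ContDiff ℝ 1 φ) (h0 : γ 0 ∉ tsupport φ) : Hold T γ Ω j φ := by
  have hgood : ∀ p ∈ closure Ω, p ≠ γ 0 → Good T γ Ω j p := by
    intro p hp hp0
    by_cases hpΩ : p ∈ Ω
    · exact good_interior hT γ Ω hΩo hfr j hpΩ
    · have : p ∈ frontier Ω := by rw [hΩo.frontier_eq]; exact ⟨hp, hpΩ⟩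
      rw [hfr] at this
      obtain ⟨t, ht, rfl⟩ := this
      refine hg t ⟨ht.1.lt_of_ne ?_, ht.2.lt_of_ne ?_⟩
      · rintro rfl; exact hp0 rfl
      · rintro rfl; exact hp0 hclosed.symm
  have hbex : ∀ p : ℝ × ℝ, ∃ b : ContDiffBump p, p ∈ closure Ω → p ≠ γ 0 →
      ∀ φ : ℝ × ℝ → ℝ, ContDiff ℝ 1 φ → HasCompactSupport φ →
      tsupport φ ⊆ tsupport b → Hold T γ Ω j φ := by
    intro p
    by_cases h : p ∈ closure Ω ∧ p ≠ γ 0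
    · obtain ⟨U, hUo, hpU, hU⟩ := hgood p h.1 h.2
      obtain ⟨ε, hε, hεs⟩ := Metric.nhds_basis_closedBall.mem_iff.1 (hUo.mem_nhds hpU)
      let b : ContDiffBump p := ⟨ε / 2, ε, by linarith, by linarith⟩
      refine ⟨b, fun _ _ φ h1 h2 h3 => hU φ h1 h2 (h3.trans ?_)⟩
      rw [b.tsupport_eq]; exact hεs
    · exact ⟨⟨1, 2, by norm_num, by norm_num⟩, fun h1 h2 => absurd ⟨h1, h2⟩ h⟩
  choose b hb using hbex
  have hK : IsCompact (closure Ω ∩ tsupport φ) :=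
    hΩb.isCompact_closure.inter_right (isClosed_tsupport φ)
  obtain ⟨S, hS, hcov⟩ := hK.elim_nhds_subcover (fun p => Metric.ball p (b p).rIn)
    (fun p _ => Metric.ball_mem_nhds p (b p).rIn_pos)
  refine hold_of_cover hT γ hγ Ω hΩb hfr j b S (fun p hp => ?_) φ hφ ?_
  · refine hb p (hS p hp).1 ?_
    rintro rfl; exact h0 (hS _ hp).2
  · intro x hx
    by_cases h : x ∈ closure Ω
    · right; exact hcov ⟨h, hx⟩
    · left; exact h

lemma hold_all {T : ℝ} (hT : 0 < T) (γ : ℝ → ℝ × ℝ) (hγ : ContDiff ℝ 1 γ)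
    (hclosed : γ 0 = γ T) (hinj : InjOn γ (Ico 0 T))
    (Ω : Set (ℝ × ℝ)) (hΩo : IsOpen Ω) (hΩb : Bornology.IsBounded Ω)
    (hfr : frontier Ω = γ '' Icc 0 T) (j : ℝ)
    (hg : ∀ t ∈ Ioo 0 T, Good T γ Ω j (γ t))
    (φ : ℝ × ℝ → ℝ) (hφ : ContDiff ℝ 1 φ) : Hold T γ Ω j φ := by
  intro v
  set p0 := γ 0 with hp0
  have hdc : Continuous (deriv γ) := hγ.continuous_deriv (by norm_num)
  let η : ContDiffBump (0 : ℝ × ℝ) := ⟨1, 2, by norm_num, by norm_num⟩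
  have hη : ContDiff ℝ 1 η := η.contDiff
  have hηd : Continuous (fderiv ℝ η) := hη.continuous_fderiv (by norm_num)
  let a : ℕ → ℝ := fun n => (n : ℝ) + 1
  have ha : ∀ n, 0 < a n := fun n => by positivity
  have hat : Tendsto a atTop atTop := tendsto_atTop_add_const_right _ _ tendsto_natCast_atTop_atTop
  let χ : ℕ → ℝ × ℝ → ℝ := fun n x => 1 - η (a n • (x - p0))
  have hχ : ∀ n, ContDiff ℝ 1 (χ n) := fun n =>
    contDiff_const.sub (hη.comp (by fun_prop))
  have hχb : ∀ n x, |χ n x| ≤ 1 := fun n x => by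
    have h1 := η.nonneg' (a n • (x - p0))
    have h2 := η.le_one (x := a n • (x - p0))
    simp only [χ]; rw [abs_le]; constructor <;> linarith
  have hχlim : ∀ x, x ≠ p0 → ∀ᶠ n in atTop, χ n x = 1 := by
    intro x hx
    have hpos : 0 < ‖x - p0‖ := norm_pos_iff.2 (sub_ne_zero.2 hx)
    filter_upwards [hat.eventually_ge_atTop (2 / ‖x - p0‖)] with n hn
    have : η (a n • (x - p0)) = 0 := by
      apply η.zero_of_le_dist
      rw [dist_zero_right, norm_smul, Real.norm_of_nonneg (ha n).le]
      exact (div_le_iff₀ hpos).1 hn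
    simp [χ, this]
  have hhold : ∀ n, Hold T γ Ω j (fun x => χ n x * φ x) := by
    intro n
    refine hold_away hT γ hγ hclosed Ω hΩo hΩb hfr j hg _ ((hχ n).mul hφ) ?_
    rw [notMem_tsupport_iff_eventuallyEq]
    have : {x : ℝ × ℝ | ‖a n • (x - p0)‖ < 1} ∈ 𝓝 (γ 0) := by
      refine (isOpen_lt (by fun_prop) continuous_const).mem_nhds ?_
      simp [p0]
    filter_upwards [this] with x hx
    have : η (a n • (x - p0)) = 1 := by
      apply η.one_of_mem_closedBall
      simpa using (le_of_lt hx)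
    simp [χ, this]
  have hd : ∀ n x, fderiv ℝ (fun x => χ n x * φ x) x v =
      χ n x * fderiv ℝ φ x v - a n * (φ x * fderiv ℝ η (a n • (x - p0)) v) := by
    intro n x
    have h1 : HasFDerivAt (fun x : ℝ × ℝ => a n • (x - p0))
        (a n • ContinuousLinearMap.id ℝ (ℝ × ℝ)) x :=
      ((hasFDerivAt_id x).sub_const p0).const_smul (a n)
    have h2 := ((hη.differentiable (by norm_num)) (a n • (x - p0))).hasFDerivAt.comp x h1
    have h3 : HasFDerivAt (χ n) _ x := h2.const_sub 1
    have h4 : HasFDerivAt (fun x => χ n x * φ x) _ x := h3.mul ((hφ.differentiable (by norm_num)) x).hasFDerivAt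
    rw [h4.fderiv]
    simp
    ring
  have hφd : Continuous fun x => fderiv ℝ φ x v :=
    (hφ.continuous_fderiv (by norm_num)).clm_apply continuous_const
  have hgint : ∀ g : ℝ × ℝ → ℝ, Continuous g → IntegrableOn g Ω := fun g hg =>
    (hg.continuousOn.integrableOn_compact hΩb.isCompact_closure).mono_set subset_closure
  have L1 : Tendsto (fun n => ∫ x in Ω, χ n x * fderiv ℝ φ x v) atTop
      (𝓝 (∫ x in Ω, fderiv ℝ φ x v)) := by
    refine tendsto_integral_of_dominated_convergence (fun x => |fderiv ℝ φ x v|) ?_ ?_ ?_ ?_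
    · intro n; exact ((hχ n).continuous.mul hφd).aestronglyMeasurable
    · exact hgint _ hφd.abs
    · intro n
      refine Eventually.of_forall fun x => ?_
      rw [Real.norm_eq_abs, abs_mul]
      exact mul_le_of_le_one_left (abs_nonneg _) (hχb n x)
    · have : ∀ᵐ x ∂(volume.restrict Ω), x ≠ p0 :=
        ae_restrict_of_ae (by simp [ae_iff, measure_singleton])
      filter_upwards [this] with x hx
      refine tendsto_const_nhds.congr' ?_
      filter_upwards [hχlim x hx] with n hn
      rw [hn, one_mul]
  have hcη : ∀ n, Continuous fun x => φ x * fderiv ℝ η (a n • (x - p0)) v := by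
    intro n
    refine hφ.continuous.mul ((hηd.comp ?_).clm_apply continuous_const)
    fun_prop
  have L2 : Tendsto (fun n => ∫ x in Ω, a n * (φ x * fderiv ℝ η (a n • (x - p0)) v)) atTop
      (𝓝 0) := by
    obtain ⟨M, hM⟩ := (hΩb.isCompact_closure.bddAbove_image (f := fun x => |φ x|)
      hφ.continuous.abs.continuousOn)
    have hcs : HasCompactSupport fun x => fderiv ℝ η x v := η.hasCompactSupport.fderiv_apply ℝ v
    obtain ⟨C, hC⟩ := hcs.exists_bound_of_continuous (hηd.clm_apply continuous_const)
    have hM' : ∀ x ∈ Ω, |φ x| ≤ max M 0 := fun x hx =>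
      (hM ⟨x, subset_closure hx, rfl⟩).trans (le_max_left _ _)
    have hC0 : 0 ≤ C := (norm_nonneg _).trans (hC 0)
    set K := (volume (Metric.ball (0 : ℝ × ℝ) 1)).toReal with hK
    have hb : ∀ n, ‖∫ x in Ω, a n * (φ x * fderiv ℝ η (a n • (x - p0)) v)‖ ≤
        (max M 0 * C * 4 * K) / a n := by
      intro n
      set R := 2 / a n
      have hR : 0 ≤ R := by have := ha n; positivity
      have e : ∫ x in Ω, a n * (φ x * fderiv ℝ η (a n • (x - p0)) v) =
          ∫ x in Ω ∩ Metric.closedBall p0 R, a n * (φ x * fderiv ℝ η (a n • (x - p0)) v) := by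
        apply setIntegral_eq_of_subset_of_forall_sdiff_eq_zero hΩo.measurableSet inter_subset_left
        rintro x ⟨hx, hx2⟩
        have h1 : R < ‖x - p0‖ := by
          by_contra h
          exact hx2 ⟨hx, by rw [Metric.mem_closedBall, dist_eq_norm]; exact not_lt.1 h⟩
        have : a n • (x - p0) ∉ tsupport (fderiv ℝ η) := by
          intro h
          have h := tsupport_fderiv_subset ℝ h
          rw [η.tsupport_eq, Metric.mem_closedBall, dist_zero_right, norm_smul,
            Real.norm_of_nonneg (ha n).le] at h
          have := (div_lt_iff₀ (ha n)).1 h1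
          change _ ≤ (2:ℝ) at h
          linarith
        rw [image_eq_zero_of_notMem_tsupport this]
        simp
      have hvol : volume (Metric.closedBall p0 R) ≠ ⊤ := measure_closedBall_lt_top.ne
      rw [e]
      refine (norm_setIntegral_le_of_norm_le_const (C := a n * (max M 0 * C)) ?_ ?_).trans ?_
      · exact (measure_mono inter_subset_right).trans_lt measure_closedBall_lt_top
      · rintro x ⟨hx, -⟩
        rw [norm_mul, norm_mul, Real.norm_of_nonneg (ha n).le]
        have := ha n
        gcongr
        · exact hM' x hx
        · exact hC _
      · have h1 : (volume : Measure (ℝ × ℝ)).real (Ω ∩ Metric.closedBall p0 R) ≤ R ^ 2 * K := by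
          refine (measureReal_mono inter_subset_right hvol).trans ?_
          rw [measureReal_def, Measure.addHaar_closedBall _ _ hR, ENNReal.toReal_mul,
            ENNReal.toReal_ofReal (by positivity)]
          simp [K]
        have h2 : 0 ≤ a n * (max M 0 * C) := by
          have := ha n; positivity
        refine (mul_le_mul_of_nonneg_left h1 h2).trans (le_of_eq ?_)
        have := (ha n).ne'
        simp only [R]; field_simp
        try ring
    refine squeeze_zero_norm hb ?_
    exact Tendsto.const_div_atTop hat _
  have L3 : Tendsto (fun n => ∫ t in (0:ℝ)..T, χ n (γ t) * φ (γ t) * cr (deriv γ t) v) atTop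
      (𝓝 (∫ t in (0:ℝ)..T, φ (γ t) * cr (deriv γ t) v)) := by
    have hc : Continuous fun t => φ (γ t) * cr (deriv γ t) v :=
      (hφ.continuous.comp hγ.continuous).mul (cr_continuous hdc v)
    refine intervalIntegral.tendsto_integral_filter_of_dominated_convergence
      (fun t => |φ (γ t) * cr (deriv γ t) v|) ?_ ?_ ?_ ?_
    · refine Eventually.of_forall fun n => ?_
      refine Continuous.aestronglyMeasurable ?_
      simp_rw [mul_assoc]
      exact ((hχ n).continuous.comp hγ.continuous).mul hc
    · refine Eventually.of_forall fun n => Eventually.of_forall fun t _ => ?_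
      rw [mul_assoc, norm_mul, Real.norm_eq_abs, Real.norm_eq_abs]
      exact mul_le_of_le_one_left (abs_nonneg _) (hχb n _)
    · exact hc.abs.intervalIntegrable _ _
    · have : ∀ᵐ t : ℝ, t ≠ T := by simp [ae_iff, measure_singleton]
      filter_upwards [this] with t ht1 ht
      rw [uIoc_of_le hT.le] at ht
      have hne : γ t ≠ p0 := by
        intro h
        have := hinj ⟨ht.1.le, ht.2.lt_of_ne ht1⟩ ⟨le_rfl, hT⟩ h
        exact ht.1.ne' this
      refine tendsto_const_nhds.congr' ?_
      filter_upwards [hχlim _ hne] with n hn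
      rw [hn, one_mul]
  have heq : ∀ n, (∫ x in Ω, χ n x * fderiv ℝ φ x v) -
      (∫ x in Ω, a n * (φ x * fderiv ℝ η (a n • (x - p0)) v)) =
      j * ∫ t in (0:ℝ)..T, χ n (γ t) * φ (γ t) * cr (deriv γ t) v := by
    intro n
    rw [← hhold n v]
    simp_rw [hd]
    exact (integral_sub (hgint _ ((hχ n).continuous.mul hφd))
      (hgint _ (continuous_const.mul (hcη n)))).symm
  have := tendsto_nhds_unique ((L1.sub L2).congr heq) (L3.const_mul j)
  rw [← this, sub_zero]

lemma exists_green {T : ℝ} (hT : 0 < T) (γ : ℝ → ℝ × ℝ) (hγ : ContDiff ℝ 1 γ)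
    (hclosed : γ 0 = γ T) (hinj : InjOn γ (Ico 0 T))
    (Ω : Set (ℝ × ℝ)) (hΩo : IsOpen Ω) (hΩb : Bornology.IsBounded Ω)
    (hfr : frontier Ω = γ '' Icc 0 T)
    (hreg : ∀ t ∈ Icc 0 T, deriv γ t ≠ 0) :
    ∃ j : ℝ, j * j = 1 ∧ ∀ φ : ℝ × ℝ → ℝ, ContDiff ℝ 1 φ → ∀ v : ℝ × ℝ,
      ∫ t in (0:ℝ)..T, φ (γ t) * cr (deriv γ t) v = j * ∫ x in Ω, fderiv ℝ φ x v := by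
  obtain ⟨j, hj, hg⟩ := good_const hT γ hγ hclosed hinj Ω hΩo hfr hreg
  have hall := fun φ hφ => hold_all hT γ hγ hclosed hinj Ω hΩo hΩb hfr j hg φ hφ
  have hj0 : j ≠ 0 := by
    intro h0
    have h1 := hall (fun x => x.1) contDiff_fst (1, 0)
    rw [h0, zero_mul] at h1
    have : ∀ x : ℝ × ℝ, fderiv ℝ (fun x : ℝ × ℝ => x.1) x (1, 0) = 1 := by
      intro x; rw [fderiv_fst]; rfl
    simp_rw [this] at h1
    simp only [integral_const, smul_eq_mul, mul_one, measureReal_restrict_apply_univ] at h1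
    have hne : Ω.Nonempty := by
      by_contra h
      rw [not_nonempty_iff_eq_empty.1 h, frontier_empty] at hfr
      have : γ 0 ∈ γ '' Icc 0 T := ⟨0, ⟨le_rfl, hT.le⟩, rfl⟩
      rw [← hfr] at this; exact this
    have hpos := hΩo.measure_pos volume hne
    have hfin : volume Ω < ⊤ := hΩb.measure_lt_top
    exact (ENNReal.toReal_pos hpos.ne' hfin.ne).ne' h1
  have hjj : j * j = 1 := by
    rcases hj with rfl | rfl | rfl
    · norm_num
    · exact absurd rfl hj0
    · norm_num
  refine ⟨j, hjj, fun φ hφ v => ?_⟩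
  rw [hall φ hφ v, ← mul_assoc, hjj, one_mul]

noncomputable def Lk (ε : ℝ) (z : ℝ × ℝ) : ℝ := (1 / 2) * Real.log (z.1 ^ 2 + z.2 ^ 2 + ε ^ 2)
noncomputable def Mk (ε : ℝ) (v z : ℝ × ℝ) : ℝ :=
  (z.1 * v.1 + z.2 * v.2) / (z.1 ^ 2 + z.2 ^ 2 + ε ^ 2)
noncomputable def Hk (ε : ℝ) (v z : ℝ × ℝ) : ℝ :=
  (v.1 ^ 2 + v.2 ^ 2) / (z.1 ^ 2 + z.2 ^ 2 + ε ^ 2) -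
    2 * (z.1 * v.1 + z.2 * v.2) ^ 2 / (z.1 ^ 2 + z.2 ^ 2 + ε ^ 2) ^ 2
noncomputable def Kk (ε : ℝ) (z : ℝ × ℝ) : ℝ := 2 * ε ^ 2 / (z.1 ^ 2 + z.2 ^ 2 + ε ^ 2) ^ 2

lemma Nk_pos {ε : ℝ} (hε : 0 < ε) (z : ℝ × ℝ) : 0 < z.1 ^ 2 + z.2 ^ 2 + ε ^ 2 := by positivity

lemma Lk_contDiff {ε : ℝ} (hε : 0 < ε) : ContDiff ℝ 1 (Lk ε) := by
  unfold Lk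
  refine contDiff_const.mul (ContDiff.log (by fun_prop) fun z => (Nk_pos hε z).ne')

lemma Mk_contDiff {ε : ℝ} (hε : 0 < ε) (v : ℝ × ℝ) : ContDiff ℝ 1 (Mk ε v) := by
  unfold Mk
  refine ContDiff.div (by fun_prop) (by fun_prop) fun z => (Nk_pos hε z).ne'

lemma Hk_continuous {ε : ℝ} (hε : 0 < ε) (v : ℝ × ℝ) : Continuous (Hk ε v) := by
  unfold Hk
  refine Continuous.sub (Continuous.div (by fun_prop) (by fun_prop) fun z => (Nk_pos hε z).ne')
    (Continuous.div (by fun_prop) (by fun_prop) fun z => (pow_pos (Nk_pos hε z) 2).ne')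

lemma Kk_continuous {ε : ℝ} (hε : 0 < ε) : Continuous (Kk ε) := by
  unfold Kk
  exact Continuous.div (by fun_prop) (by fun_prop) fun z => (pow_pos (Nk_pos hε z) 2).ne'

lemma Hk_sum {ε : ℝ} (hε : 0 < ε) (z : ℝ × ℝ) : Hk ε (1, 0) z + Hk ε (0, 1) z = Kk ε z := by
  have := (Nk_pos hε z).ne'
  unfold Hk Kk
  field_simp
  ring

lemma line_deriv_eq {f : ℝ × ℝ → ℝ} (x v : ℝ × ℝ) (hf : DifferentiableAt ℝ f x) {d : ℝ}
    (h : HasDerivAt (fun h : ℝ => f (x + h • v)) d 0) : fderiv ℝ f x v = d := by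
  rw [← hf.lineDeriv_eq_fderiv]
  exact h.deriv

lemma Lk_fderiv {ε : ℝ} (hε : 0 < ε) (c x v : ℝ × ℝ) :
    fderiv ℝ (fun y => Lk ε (c - y)) x v = - Mk ε v (c - x) := by
  apply line_deriv_eq
  · have : ContDiff ℝ 1 (fun y => Lk ε (c - y)) := (Lk_contDiff hε).comp (by fun_prop)
    exact (this.differentiable (by norm_num)) x
  · unfold Lk Mk
    have hl : ∀ a b w : ℝ, HasDerivAt (fun h : ℝ => (a - (b + h * w))) (-w) 0 := by
      intro a b w
      have := (((hasDerivAt_id (0:ℝ)).mul_const w).const_add b).const_sub a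
      simpa using this
    have h1 := (((hl c.1 x.1 v.1).pow 2).add ((hl c.2 x.2 v.2).pow 2)).add_const (ε ^ 2)
    have h2 := (h1.log (by simpa using (Nk_pos hε (c - x)).ne')).const_mul (1 / 2 : ℝ)
    have := (Nk_pos hε (c - x)).ne'
    refine (h2.congr_deriv ?_).congr_of_eventuallyEq (Eventually.of_forall fun h => ?_)
    · simp at this ⊢
      field_simp
      ring
    · simp

lemma Mk_fderiv {ε : ℝ} (hε : 0 < ε) (c x v : ℝ × ℝ) :
    fderiv ℝ (fun y => Mk ε v (y - c)) x v = Hk ε v (x - c) := by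
  apply line_deriv_eq
  · have : ContDiff ℝ 1 (fun y => Mk ε v (y - c)) := (Mk_contDiff hε v).comp (by fun_prop)
    exact (this.differentiable (by norm_num)) x
  · unfold Mk Hk
    have hl : ∀ a b w : ℝ, HasDerivAt (fun h : ℝ => ((b + h * w) - a)) w 0 := by
      intro a b w
      have := (((hasDerivAt_id (0:ℝ)).mul_const w).const_add b).sub_const a
      simpa using this
    have h1 := (((hl c.1 x.1 v.1).pow 2).add ((hl c.2 x.2 v.2).pow 2)).add_const (ε ^ 2)
    have h0 := ((hl c.1 x.1 v.1).mul_const v.1).add ((hl c.2 x.2 v.2).mul_const v.2)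
    have h2 := h0.div h1 (by simpa using (Nk_pos hε (x - c)).ne')
    have := (Nk_pos hε (x - c)).ne'
    refine (h2.congr_deriv ?_).congr_of_eventuallyEq (Eventually.of_forall fun h => ?_)
    · simp at this ⊢
      field_simp

    · simp

lemma integrable_prod_of_cont {X Y : Type*} [TopologicalSpace X] [TopologicalSpace Y]
    [MeasureSpace X] [MeasureSpace Y] [OpensMeasurableSpace (X × Y)] [T2Space (X × Y)]
    [SFinite (volume : Measure X)] [SFinite (volume : Measure Y)]
    [IsFiniteMeasureOnCompacts (volume.prod volume : Measure (X × Y))]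
    {A : Set X} {B : Set Y} {A' : Set X} {B' : Set Y} (hA : IsCompact A') (hB : IsCompact B')
    (hA' : A ⊆ A') (hB' : B ⊆ B') (f : X × Y → ℝ) (hf : Continuous f) :
    Integrable f ((volume.restrict A).prod (volume.restrict B)) := by
  rw [Measure.prod_restrict]
  exact (hf.continuousOn.integrableOn_compact (hA.prod hB)).mono_set (prod_mono hA' hB')

lemma I_eps_dir {T : ℝ} (hT : 0 < T) (γ : ℝ → ℝ × ℝ) (hγ : ContDiff ℝ 1 γ)
    (Ω : Set (ℝ × ℝ)) (hΩb : Bornology.IsBounded Ω)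
    (j : ℝ) (hj : j * j = 1)
    (hgreen : ∀ φ : ℝ × ℝ → ℝ, ContDiff ℝ 1 φ → ∀ v : ℝ × ℝ,
      ∫ t in (0:ℝ)..T, φ (γ t) * cr (deriv γ t) v = j * ∫ x in Ω, fderiv ℝ φ x v)
    {ε : ℝ} (hε : 0 < ε) (v : ℝ × ℝ) :
    ∫ s in (0:ℝ)..T, ∫ t in (0:ℝ)..T, Lk ε (γ s - γ t) * (cr (deriv γ s) v * cr (deriv γ t) v) =
      - ∫ y in Ω, ∫ x in Ω, Hk ε v (x - y) := by
  have hdc : Continuous (deriv γ) := hγ.continuous_deriv (by norm_num)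
  have h1 : ∀ s, ∫ t in (0:ℝ)..T, Lk ε (γ s - γ t) * (cr (deriv γ s) v * cr (deriv γ t) v) =
      (-j) * ∫ y in Ω, Mk ε v (γ s - y) * cr (deriv γ s) v := by
    intro s
    have := hgreen (fun y => Lk ε (γ s - y)) ((Lk_contDiff hε).comp (by fun_prop)) v
    simp_rw [Lk_fderiv hε] at this
    rw [integral_neg] at this
    rw [integral_mul_const]
    have e : ∀ t, Lk ε (γ s - γ t) * (cr (deriv γ s) v * cr (deriv γ t) v) =
      cr (deriv γ s) v * (Lk ε (γ s - γ t) * cr (deriv γ t) v) := fun t => by ring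
    simp_rw [e]
    rw [intervalIntegral.integral_const_mul, this]
    ring
  simp_rw [h1]
  rw [intervalIntegral.integral_const_mul, intervalIntegral_integral_swap]
  · have h2 : ∀ y, ∫ s in (0:ℝ)..T, Mk ε v (γ s - y) * cr (deriv γ s) v =
        j * ∫ x in Ω, Hk ε v (x - y) := by
      intro y
      have := hgreen (fun x => Mk ε v (x - y)) ((Mk_contDiff hε v).comp (by fun_prop)) v
      simp_rw [Mk_fderiv hε] at this
      exact this
    simp_rw [h2]
    rw [integral_const_mul, ← mul_assoc]
    rw [show -j * j = -1 by linarith]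
    ring
  · refine integrable_prod_of_cont (isCompact_uIcc (a := 0) (b := T)) hΩb.isCompact_closure
      uIoc_subset_uIcc subset_closure _ ?_
    refine Continuous.mul ((Mk_contDiff hε v).continuous.comp ?_)
      ((cr_continuous hdc v).comp continuous_fst)
    have := hγ.continuous
    fun_prop

lemma I_eps {T : ℝ} (hT : 0 < T) (γ : ℝ → ℝ × ℝ) (hγ : ContDiff ℝ 1 γ)
    (Ω : Set (ℝ × ℝ)) (hΩb : Bornology.IsBounded Ω)
    (j : ℝ) (hj : j * j = 1)
    (hgreen : ∀ φ : ℝ × ℝ → ℝ, ContDiff ℝ 1 φ → ∀ v : ℝ × ℝ,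
      ∫ t in (0:ℝ)..T, φ (γ t) * cr (deriv γ t) v = j * ∫ x in Ω, fderiv ℝ φ x v)
    {ε : ℝ} (hε : 0 < ε) :
    ∫ s in (0:ℝ)..T, ∫ t in (0:ℝ)..T, Lk ε (γ s - γ t) *
      ((deriv γ s).1 * (deriv γ t).1 + (deriv γ s).2 * (deriv γ t).2) =
      - ∫ y in Ω, ∫ x in Ω, Kk ε (x - y) := by
  have hdc : Continuous (deriv γ) := hγ.continuous_deriv (by norm_num)
  have hd := fun v => I_eps_dir hT γ hγ Ω hΩb j hj hgreen hε v
  have hL : Continuous (Lk ε) := (Lk_contDiff hε).continuous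
  have hγc := hγ.continuous
  have hc : ∀ v, Continuous (Function.uncurry fun s t : ℝ =>
      Lk ε (γ s - γ t) * (cr (deriv γ s) v * cr (deriv γ t) v)) := by
    intro v
    unfold cr
    refine Continuous.mul (hL.comp (by fun_prop)) ?_
    fun_prop
  have e : ∀ s t, Lk ε (γ s - γ t) *
      ((deriv γ s).1 * (deriv γ t).1 + (deriv γ s).2 * (deriv γ t).2) =
      Lk ε (γ s - γ t) * (cr (deriv γ s) (1, 0) * cr (deriv γ t) (1, 0)) +
      Lk ε (γ s - γ t) * (cr (deriv γ s) (0, 1) * cr (deriv γ t) (0, 1)) := by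
    intro s t; simp [cr]; ring
  have hci : ∀ v s, IntervalIntegrable (fun t =>
      Lk ε (γ s - γ t) * (cr (deriv γ s) v * cr (deriv γ t) v)) volume 0 T := by
    intro v s
    exact ((hc v).comp (by fun_prop : Continuous fun t : ℝ => (s, t))).intervalIntegrable _ _
  have hci2 : ∀ v, IntervalIntegrable (fun s => ∫ t in (0:ℝ)..T,
      Lk ε (γ s - γ t) * (cr (deriv γ s) v * cr (deriv γ t) v)) volume 0 T := by
    intro v
    exact (intervalIntegral.continuous_parametric_intervalIntegral_of_continuous' (hc v) 0
      T).intervalIntegrable _ _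
  simp_rw [e]
  rw [intervalIntegral.integral_congr (fun s _ => intervalIntegral.integral_add
    (hci (1, 0) s) (hci (0, 1) s)), intervalIntegral.integral_add (hci2 _) (hci2 _), hd, hd]
  have hH : ∀ v, Integrable (Function.uncurry fun y x => Hk ε v (x - y))
      ((volume.restrict Ω).prod (volume.restrict Ω)) := by
    intro v
    refine integrable_prod_of_cont hΩb.isCompact_closure hΩb.isCompact_closure
      subset_closure subset_closure _ ?_
    exact (Hk_continuous hε v).comp (by fun_prop)
  have hadd := integral_integral_add (hH (1, 0)) (hH (0, 1))
  simp only [Function.uncurry, Hk_sum hε] at hadd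
  rw [← neg_add, ← hadd]

lemma Kk_one_integral : ∫ z, Kk 1 z = 2 * Real.pi := by
  rw [← integral_comp_polarCoord_symm]
  have h1 : ∀ p : ℝ × ℝ, p.1 • Kk 1 (polarCoord.symm p) =
      (2 * p.1 / (p.1 ^ 2 + 1) ^ 2) * 1 := by
    intro p
    simp only [Kk, polarCoord_symm_apply, smul_eq_mul]
    have : (p.1 * Real.cos p.2) ^ 2 + (p.1 * Real.sin p.2) ^ 2 + 1 ^ 2 = p.1 ^ 2 + 1 := by
      have := Real.sin_sq_add_cos_sq p.2
      linear_combination p.1 ^ 2 * this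
    rw [this]; ring
  simp_rw [h1]
  rw [polarCoord_target, Measure.volume_eq_prod,
    setIntegral_prod_mul (fun r : ℝ => 2 * r / (r ^ 2 + 1) ^ 2) (fun _ : ℝ => (1 : ℝ))]
  have h2 : ∫ r in Ioi (0:ℝ), 2 * r / (r ^ 2 + 1) ^ 2 = 1 := by
    have := integral_Ioi_of_hasDerivAt_of_nonneg' (a := 0) (g := fun r : ℝ => - (r ^ 2 + 1)⁻¹)
      (g' := fun r => 2 * r / (r ^ 2 + 1) ^ 2) (l := 0) ?_ ?_ ?_
    · rw [this]; norm_num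
    · intro r _
      have h := ((hasDerivAt_pow 2 r).add_const 1)
      have h' := (h.inv (by positivity : r ^ 2 + 1 ≠ 0)).neg
      refine h'.congr_deriv ?_
      simp; ring
    · intro r hr
      have : 0 < r := hr
      positivity
    · have : Tendsto (fun r : ℝ => r ^ 2 + 1) atTop atTop :=
        tendsto_atTop_add_const_right _ _ (tendsto_pow_atTop (by norm_num))
      simpa using this.inv_tendsto_atTop.neg
  rw [h2]
  simp
  have := Real.pi_pos
  rw [max_eq_left (by linarith)]; ring

lemma Kk_one_integrable : Integrable (Kk 1) := by
  by_contra h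
  have := integral_undef h
  rw [Kk_one_integral] at this
  have := Real.pi_pos
  linarith

lemma Kk_nonneg (ε : ℝ) (z : ℝ × ℝ) : 0 ≤ Kk ε z := by unfold Kk; positivity

lemma Kk_scale (Ω : Set (ℝ × ℝ)) (hΩo : IsOpen Ω) {ε : ℝ} (hε : 0 < ε) (y : ℝ × ℝ) :
    ∫ x in Ω, Kk ε (x - y) = ∫ w, Ω.indicator (fun _ => (1:ℝ)) (y + ε • w) * Kk 1 w := by
  rw [← integral_indicator hΩo.measurableSet]
  rw [← integral_add_left_eq_self _ y]
  have := Measure.integral_comp_smul (volume : Measure (ℝ × ℝ))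
    (fun x => Ω.indicator (fun x => Kk ε (x - y)) (y + x)) ε
  have hf : Module.finrank ℝ (ℝ × ℝ) = 2 := by simp
  rw [hf, abs_of_pos (by positivity), smul_eq_mul] at this
  have h2 : ∀ w, Ω.indicator (fun _ => (1:ℝ)) (y + ε • w) * Kk 1 w =
      ε ^ 2 * Ω.indicator (fun x => Kk ε (x - y)) (y + ε • w) := by
    intro w
    by_cases h : y + ε • w ∈ Ω
    · rw [indicator_of_mem h, indicator_of_mem h]
      simp only [Kk, add_sub_cancel_left, Prod.smul_fst, Prod.smul_snd, smul_eq_mul]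
      have h1 := (Nk_pos hε (ε • w)).ne'
      have h3 := (Nk_pos one_pos w).ne'
      simp only [Prod.smul_fst, Prod.smul_snd, smul_eq_mul] at h1
      field_simp
    · rw [indicator_of_notMem h, indicator_of_notMem h]; simp
  simp_rw [h2]
  rw [integral_const_mul, this]
  field_simp

lemma Kk_limit (Ω : Set (ℝ × ℝ)) (hΩo : IsOpen Ω) (hΩb : Bornology.IsBounded Ω)
    (ε : ℕ → ℝ) (hε : ∀ n, 0 < ε n) (hlim : Tendsto ε atTop (𝓝 0)) :
    Tendsto (fun n => ∫ y in Ω, ∫ x in Ω, Kk (ε n) (x - y)) atTop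
      (𝓝 (2 * Real.pi * (volume Ω).toReal)) := by
  have hfin : volume Ω < ⊤ := hΩb.measure_lt_top
  have hm : ∀ n y, Measurable fun w : ℝ × ℝ =>
      Ω.indicator (fun _ => (1:ℝ)) (y + ε n • w) * Kk 1 w := by
    intro n y
    refine Measurable.mul ?_ (Kk_continuous one_pos).measurable
    exact (measurable_const.indicator hΩo.measurableSet).comp (by fun_prop)
  have hb : ∀ n y w, ‖Ω.indicator (fun _ => (1:ℝ)) (y + ε n • w) * Kk 1 w‖ ≤ Kk 1 w := by
    intro n y w
    rw [norm_mul, Real.norm_of_nonneg (Kk_nonneg 1 w)]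
    refine mul_le_of_le_one_left (Kk_nonneg 1 w) ?_
    by_cases h : y + ε n • w ∈ Ω
    · rw [indicator_of_mem h]; simp
    · rw [indicator_of_notMem h]; simp
  have hin : ∀ y ∈ Ω, Tendsto (fun n => ∫ x in Ω, Kk (ε n) (x - y)) atTop (𝓝 (2 * Real.pi)) := by
    intro y hy
    rw [← Kk_one_integral]
    simp_rw [Kk_scale Ω hΩo (hε _) y]
    refine tendsto_integral_of_dominated_convergence (Kk 1) (fun n => (hm n y).aestronglyMeasurable)
      Kk_one_integrable (fun n => Eventually.of_forall (hb n y)) (Eventually.of_forall fun w => ?_)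
    have h1 : Tendsto (fun n => y + ε n • w) atTop (𝓝 y) := by
      simpa using (hlim.smul_const w).const_add y
    refine tendsto_const_nhds.congr' ?_
    filter_upwards [h1.eventually (hΩo.mem_nhds hy)] with n hn
    rw [indicator_of_mem hn, one_mul]
  have : 2 * Real.pi * (volume Ω).toReal = ∫ y in Ω, 2 * Real.pi := by
    simp [measureReal_def, mul_comm]
  rw [this]
  refine tendsto_integral_of_dominated_convergence (fun _ => 2 * Real.pi) ?_ ?_ ?_ ?_
  · intro n
    have : Integrable (Function.uncurry fun y x => Kk (ε n) (x - y))
      ((volume.restrict Ω).prod (volume.restrict Ω)) :=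
      integrable_prod_of_cont hΩb.isCompact_closure hΩb.isCompact_closure
      subset_closure subset_closure _ ((Kk_continuous (hε n)).comp (by fun_prop))
    exact this.integral_prod_left.aestronglyMeasurable
  · exact integrableOn_const hfin.ne
  · intro n
    refine Eventually.of_forall fun y => ?_
    rw [Kk_scale Ω hΩo (hε n) y, ← Kk_one_integral]
    exact norm_integral_le_of_norm_le Kk_one_integrable (Eventually.of_forall (hb n y))
  · rw [ae_restrict_iff' hΩo.measurableSet]
    exact Eventually.of_forall hin

lemma lem_D (γ : ℝ → ℝ × ℝ) (hγ : ContDiff ℝ 1 γ) (t0 : ℝ) (h : deriv γ t0 ≠ 0) :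
    ∃ δ > 0, ∃ c > 0, ∀ t ∈ Icc (t0 - δ) (t0 + δ), ∀ t' ∈ Icc (t0 - δ) (t0 + δ),
      c * |t - t'| ≤ ‖γ t - γ t'‖ := by
  have hs : HasStrictDerivAt γ (deriv γ t0) t0 :=
    hγ.contDiffAt.hasStrictDerivAt (by norm_num)
  have hpos : 0 < ‖deriv γ t0‖ := norm_pos_iff.2 h
  have h1 := hs.isLittleO.def (half_pos hpos)
  rw [Metric.eventually_nhds_iff] at h1
  obtain ⟨e, he, h2⟩ := h1
  refine ⟨e / 2, by positivity, ‖deriv γ t0‖ / 2, by positivity, fun t ht t' ht' => ?_⟩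
  have h3 := @h2 (t, t') (by
    rw [Prod.dist_eq, max_lt_iff, Real.dist_eq, Real.dist_eq, abs_lt, abs_lt]
    simp only [mem_Icc] at *
    constructor <;> constructor <;> linarith)
  simp only [Real.norm_eq_abs] at h3
  have h4 : ‖(t - t') • deriv γ t0‖ = |t - t'| * ‖deriv γ t0‖ := norm_smul _ _
  have h5 : ‖(t - t') • deriv γ t0‖ ≤ ‖γ t - γ t'‖ + ‖γ t - γ t' - (t - t') • deriv γ t0‖ := by
    have := norm_sub_le (γ t - γ t') (γ t - γ t' - (t - t') • deriv γ t0)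
    simpa using this
  have h6 : ‖γ t - γ t' - (t - t') • deriv γ t0‖ ≤ ‖deriv γ t0‖ / 2 * |t - t'| := by
    simpa using h3
  rw [h4] at h5
  nlinarith

lemma Lk0_bound {z : ℝ × ℝ} {a b : ℝ} (ha : 0 < a) (h1 : a ≤ ‖z‖) (h2 : ‖z‖ ≤ b) :
    |Lk 0 z| ≤ |Real.log a| + |(1/2) * Real.log (2 * b ^ 2)| := by
  have hz1 : |z.1| ≤ ‖z‖ := norm_fst_le z
  have hz2 : |z.2| ≤ ‖z‖ := norm_snd_le z
  have hz : ‖z‖ = |z.1| ∨ ‖z‖ = |z.2| := by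
    rw [Prod.norm_def]; exact max_choice _ _
  have hq1 := sq_abs z.1
  have hq2 := sq_abs z.2
  have hp1 := abs_nonneg z.1
  have hp2 := abs_nonneg z.2
  have hN1 : a ^ 2 ≤ z.1 ^ 2 + z.2 ^ 2 + 0 ^ 2 := by
    rcases hz with h | h <;> rw [h] at h1 <;> nlinarith
  have hN2 : z.1 ^ 2 + z.2 ^ 2 + 0 ^ 2 ≤ 2 * b ^ 2 := by nlinarith
  have hl1 := Real.log_le_log (by positivity) hN1
  have hl2 := Real.log_le_log (by nlinarith [pow_pos ha 2]) hN2
  rw [Real.log_pow] at hl1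
  push_cast at hl1
  unfold Lk
  generalize Real.log (z.1 ^ 2 + z.2 ^ 2 + 0 ^ 2) = N at *
  generalize Real.log (2 * b ^ 2) = N' at *
  rw [abs_le]
  constructor
  · have := neg_abs_le (Real.log a)
    have := abs_nonneg ((1/2) * N')
    linarith
  · have := le_abs_self ((1/2) * N')
    have := abs_nonneg (Real.log a)
    linarith

open scoped ENNReal in
lemma lem_E (γ : ℝ → ℝ × ℝ) (hγ : ContDiff ℝ 1 γ) (t0 : ℝ) (h : deriv γ t0 ≠ 0) (R : ℝ) :
    ∃ δ > 0, ∃ M : ℝ≥0∞, M ≠ ⊤ ∧ ∀ p : ℝ × ℝ, ‖p‖ ≤ R →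
      ∫⁻ t in Icc (t0 - δ) (t0 + δ), ‖Lk 0 (p - γ t)‖ₑ ≤ M := by
  obtain ⟨δ, hδ, c, hc, hD⟩ := lem_D γ hγ t0 h
  obtain ⟨B, hB⟩ := (isCompact_Icc (a := t0 - δ) (b := t0 + δ)).exists_bound_of_continuousOn
    hγ.continuous.continuousOn
  set C : ℝ := |Real.log (c / 2)| + |(1/2) * Real.log (2 * (R + B) ^ 2)| with hC
  have hlogint : IntegrableOn Real.log (Icc (-(2 * δ)) (2 * δ)) := by
    have := (intervalIntegral.intervalIntegrable_log' (a := -(2*δ)) (b := 2 * δ))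
    rw [intervalIntegrable_iff_integrableOn_Ioc_of_le (by linarith)] at this
    exact (integrableOn_Icc_iff_integrableOn_Ioc (by simp)).2 this
  refine ⟨δ, hδ, ENNReal.ofReal C * volume (Icc (t0 - δ) (t0 + δ)) +
    ∫⁻ u in Icc (-(2 * δ)) (2 * δ), ‖Real.log u‖ₑ, ?_, fun p hp => ?_⟩
  · refine ENNReal.add_ne_top.2 ⟨ENNReal.mul_ne_top ENNReal.ofReal_ne_top (by simp), ?_⟩
    exact hlogint.2.ne
  · obtain ⟨ts, hts, hmin⟩ := (isCompact_Icc (a := t0 - δ) (b := t0 + δ)).exists_isMinOn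
      ⟨t0, by constructor <;> linarith⟩
      (f := fun t => ‖p - γ t‖) (by have := hγ.continuous; fun_prop)
    have hpt : ∀ t ∈ Icc (t0 - δ) (t0 + δ), t ≠ ts →
        ‖Lk 0 (p - γ t)‖ₑ ≤ ENNReal.ofReal C + ‖Real.log (t - ts)‖ₑ := by
      intro t ht hne
      have ha : 0 < |t - ts| := abs_pos.2 (sub_ne_zero.2 hne)
      have h1 : c / 2 * |t - ts| ≤ ‖p - γ t‖ := by
        have := hD t ht ts hts
        have h3 : ‖p - γ ts‖ ≤ ‖p - γ t‖ := hmin ht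
        have h4 : ‖γ t - γ ts‖ ≤ ‖p - γ ts‖ + ‖p - γ t‖ := by
          have := norm_sub_le (p - γ ts) (p - γ t)
          simpa using this
        linarith
      have h2 : ‖p - γ t‖ ≤ R + B := (norm_sub_le _ _).trans (add_le_add hp (hB t ht))
      have h3 := Lk0_bound (by positivity) h1 h2
      rw [Real.log_mul (by positivity) ha.ne', Real.log_abs] at h3
      have h4 : |Lk 0 (p - γ t)| ≤ C + |Real.log (t - ts)| := by
        have := abs_add_le (Real.log (c/2)) (Real.log (t - ts))
        rw [hC]; linarith
      rw [← Real.norm_eq_abs] at h4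
      rw [← ofReal_norm, ← ofReal_norm, ← ENNReal.ofReal_add (by positivity)
        (by positivity), Real.norm_eq_abs (Real.log _)]
      exact ENNReal.ofReal_le_ofReal h4
    calc ∫⁻ t in Icc (t0 - δ) (t0 + δ), ‖Lk 0 (p - γ t)‖ₑ
        ≤ ∫⁻ t in Icc (t0 - δ) (t0 + δ), (ENNReal.ofReal C + ‖Real.log (t - ts)‖ₑ) := by
          refine lintegral_mono_ae ?_
          rw [ae_restrict_iff' measurableSet_Icc]
          have : ∀ᵐ t : ℝ, t ≠ ts := by simp [ae_iff]
          filter_upwards [this] with t h1 h2 using hpt t h2 h1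
      _ = ENNReal.ofReal C * volume (Icc (t0 - δ) (t0 + δ)) +
          ∫⁻ t in Icc (t0 - δ) (t0 + δ), ‖Real.log (t - ts)‖ₑ := by
          rw [lintegral_add_left measurable_const, setLIntegral_const]
      _ ≤ _ := by
          refine add_le_add le_rfl ?_
          rw [← lintegral_indicator measurableSet_Icc, ← lintegral_indicator measurableSet_Icc]
          rw [← lintegral_sub_right_eq_self ((Icc (-(2 * δ)) (2 * δ)).indicator _) ts]
          refine lintegral_mono fun t => ?_
          simp only [indicator]
          split_ifs with h1 h2
          · rfl
          · exfalso; apply h2; simp only [mem_Icc] at *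
            constructor <;> linarith
          · simp
          · simp

open scoped ENNReal in
lemma lem_F {T : ℝ} (γ : ℝ → ℝ × ℝ) (hγ : ContDiff ℝ 1 γ)
    (hreg : ∀ t ∈ Icc 0 T, deriv γ t ≠ 0) (R : ℝ) :
    ∃ M : ℝ≥0∞, M ≠ ⊤ ∧ ∀ p : ℝ × ℝ, ‖p‖ ≤ R →
      ∫⁻ t in Icc 0 T, ‖Lk 0 (p - γ t)‖ₑ ≤ M := by
  refine IsCompact.induction_on (p := fun S => ∃ M : ℝ≥0∞, M ≠ ⊤ ∧ ∀ p : ℝ × ℝ, ‖p‖ ≤ R →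
      ∫⁻ t in S, ‖Lk 0 (p - γ t)‖ₑ ≤ M) (isCompact_Icc (a := (0:ℝ)) (b := T)) ?_ ?_ ?_ ?_
  · exact ⟨0, by simp, by simp⟩
  · rintro s t hst ⟨M, hM, h⟩
    exact ⟨M, hM, fun p hp => (lintegral_mono_set hst).trans (h p hp)⟩
  · rintro s t ⟨M, hM, h⟩ ⟨M', hM', h'⟩
    exact ⟨M + M', ENNReal.add_ne_top.2 ⟨hM, hM'⟩, fun p hp =>
      (lintegral_union_le _ _ _).trans (add_le_add (h p hp) (h' p hp))⟩
  · intro t ht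
    obtain ⟨δ, hδ, hM⟩ := lem_E γ hγ t (hreg t ht) R
    exact ⟨_, mem_nhdsWithin_of_mem_nhds (Icc_mem_nhds (by linarith) (by linarith)), hM⟩

lemma Lk_dom {z : ℝ × ℝ} (hz : z ≠ 0) {ε : ℝ} (h0 : 0 ≤ ε) (h1 : ε ≤ 1) :
    |Lk ε z| ≤ |Lk 0 z| + |Lk 1 z| := by
  have hN : 0 < z.1 ^ 2 + z.2 ^ 2 := by
    by_contra hn
    apply hz
    have h1 := sq_nonneg z.1
    have h2 := sq_nonneg z.2
    ext <;> simp <;> nlinarith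
  have ha : Lk 0 z ≤ Lk ε z := by
    unfold Lk
    gcongr
  have hb : Lk ε z ≤ Lk 1 z := by
    unfold Lk
    gcongr
  rw [abs_le]
  constructor
  · linarith [neg_abs_le (Lk 0 z), abs_nonneg (Lk 1 z)]
  · linarith [le_abs_self (Lk 1 z), abs_nonneg (Lk 0 z)]

lemma Lk_tendsto {z : ℝ × ℝ} (hz : z ≠ 0) {ε : ℕ → ℝ} (hε : Tendsto ε atTop (𝓝 0)) :
    Tendsto (fun n => Lk (ε n) z) atTop (𝓝 (Lk 0 z)) := by
  have hN : z.1 ^ 2 + z.2 ^ 2 + 0 ^ 2 ≠ 0 := by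
    intro hn
    apply hz
    have h1 := sq_nonneg z.1
    have h2 := sq_nonneg z.2
    ext <;> simp <;> nlinarith
  unfold Lk
  exact ((tendsto_const_nhds.add (hε.pow 2)).log hN).const_mul _

lemma I_limit {T : ℝ} (hT : 0 < T) (γ : ℝ → ℝ × ℝ) (hγ : ContDiff ℝ 1 γ)
    (hclosed : γ 0 = γ T) (hinj : InjOn γ (Ico 0 T))
    (hreg : ∀ t ∈ Icc 0 T, deriv γ t ≠ 0) (w : ℝ → ℝ → ℝ)
    (hw : Continuous (Function.uncurry w)) (ε : ℕ → ℝ) (hε : ∀ n, 0 < ε n) (hε1 : ∀ n, ε n ≤ 1)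
    (hlim : Tendsto ε atTop (𝓝 0)) :
    Tendsto (fun n => ∫ s in (0:ℝ)..T, ∫ t in (0:ℝ)..T, Lk (ε n) (γ s - γ t) * w s t) atTop
      (𝓝 (∫ s in (0:ℝ)..T, ∫ t in (0:ℝ)..T, Lk 0 (γ s - γ t) * w s t)) := by
  have hγc := hγ.continuous
  obtain ⟨R, hR⟩ := (isCompact_Icc (a := (0:ℝ)) (b := T)).exists_bound_of_continuousOn
    hγc.continuousOn
  obtain ⟨W, hW⟩ := ((isCompact_Icc (a := (0:ℝ)) (b := T)).prod
    (isCompact_Icc (a := (0:ℝ)) (b := T))).exists_bound_of_continuousOn hw.continuousOn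
  have hL1c : Continuous (fun p : ℝ × ℝ => Lk 1 (γ p.1 - γ p.2)) :=
    (Lk_contDiff one_pos).continuous.comp (by fun_prop)
  obtain ⟨L1, hL1⟩ := ((isCompact_Icc (a := (0:ℝ)) (b := T)).prod
    (isCompact_Icc (a := (0:ℝ)) (b := T))).exists_bound_of_continuousOn hL1c.continuousOn
  obtain ⟨M, hM, hF⟩ := lem_F γ hγ hreg R
  have h0 : (0:ℝ) ∈ Icc 0 T := ⟨le_rfl, hT.le⟩
  have hW0 : 0 ≤ W := (norm_nonneg _).trans (hW (0, 0) ⟨h0, h0⟩)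
  have hL10 : 0 ≤ L1 := (norm_nonneg _).trans (hL1 (0, 0) ⟨h0, h0⟩)
  have hmeas : ∀ (p : ℝ × ℝ), Measurable (fun t => Lk 0 (p - γ t)) := by
    intro p
    unfold Lk
    have := hγc.measurable
    fun_prop
  have hne : ∀ s ∈ Icc 0 T, ∀ᵐ t : ℝ, t ∈ Icc 0 T → γ s - γ t ≠ 0 := by
    intro s hs
    have e1 : ∀ᵐ t : ℝ, t ≠ s := by simp [ae_iff]
    have e2 : ∀ᵐ t : ℝ, t ≠ 0 := by simp [ae_iff]
    have e3 : ∀ᵐ t : ℝ, t ≠ T := by simp [ae_iff]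
    filter_upwards [e1, e2, e3] with t h1 h2 h3 ht heq
    have heq := sub_eq_zero.1 heq
    have htI : t ∈ Ico 0 T := ⟨ht.1, lt_of_le_of_ne ht.2 h3⟩
    rcases eq_or_lt_of_le hs.2 with h | h
    · rw [h, ← hclosed] at heq
      exact h2 (hinj ⟨le_rfl, hT⟩ htI heq).symm
    · exact h1 (hinj ⟨hs.1, h⟩ htI heq).symm
  have hgint : ∀ s ∈ Icc 0 T, IntegrableOn (fun t => Lk 0 (γ s - γ t)) (Icc 0 T) := by
    intro s hs
    exact ⟨(hmeas _).aestronglyMeasurable, lt_of_le_of_lt (hF _ (hR s hs)) hM.lt_top⟩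
  have hbint : ∀ s ∈ Icc 0 T, IntegrableOn (fun t => (|Lk 0 (γ s - γ t)| + L1) * W) (Icc 0 T) := by
    intro s hs
    exact ((hgint s hs).abs.add (integrableOn_const (by simp))).mul_const W
  have hbd : ∀ n, ∀ s ∈ Icc 0 T, ∀ t ∈ Icc 0 T, γ s - γ t ≠ 0 →
      ‖Lk (ε n) (γ s - γ t) * w s t‖ ≤ (|Lk 0 (γ s - γ t)| + L1) * W := by
    intro n s hs t ht hne
    rw [norm_mul]
    have a1 := Lk_dom hne (hε n).le (hε1 n)
    have a2 := hL1 (s, t) ⟨hs, ht⟩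
    have a3 := hW (s, t) ⟨hs, ht⟩
    simp only [Real.norm_eq_abs] at a2 a3 ⊢
    exact mul_le_mul (a1.trans (by linarith)) a3 (abs_nonneg _) (by positivity)
  have hsub : uIoc 0 T ⊆ Icc 0 T := by rw [uIoc_of_le hT.le]; exact Ioc_subset_Icc_self
  have hcn : ∀ n, Continuous (Function.uncurry fun s t : ℝ => Lk (ε n) (γ s - γ t) * w s t) := by
    intro n
    exact ((Lk_contDiff (hε n)).continuous.comp (by fun_prop)).mul hw
  refine intervalIntegral.tendsto_integral_filter_of_dominated_convergence
    (fun _ => (M.toReal + L1 * T) * W) ?_ ?_ (by simp) ?_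
  · refine Eventually.of_forall fun n => ?_
    exact (intervalIntegral.continuous_parametric_intervalIntegral_of_continuous' (hcn n) 0
      T).aestronglyMeasurable
  · refine Eventually.of_forall fun n => Eventually.of_forall fun s hs => ?_
    have hs := hsub hs
    have hle := intervalIntegral.norm_integral_le_of_norm_le (μ := volume) hT.le
      (f := fun t => Lk (ε n) (γ s - γ t) * w s t)
      (g := fun t => (|Lk 0 (γ s - γ t)| + L1) * W) ?_ ?_
    · refine hle.trans ?_
      rw [intervalIntegral.integral_mul_const]
      refine mul_le_mul_of_nonneg_right ?_ hW0
      rw [intervalIntegral.integral_of_le hT.le, ← integral_Icc_eq_integral_Ioc,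
        integral_add (hgint s hs).abs (integrableOn_const (by simp))]
      gcongr
      · rw [integral_eq_lintegral_of_nonneg_ae (Eventually.of_forall fun t => abs_nonneg _)
          (hgint s hs).abs.1]
        refine ENNReal.toReal_mono hM (le_trans (le_of_eq ?_) (hF _ (hR s hs)))
        refine lintegral_congr fun t => ?_
        rw [← ofReal_norm, Real.norm_eq_abs]
      · simp [hT.le, mul_comm]
    · filter_upwards [hne s hs] with t h1 h2
      exact hbd n s hs t (Ioc_subset_Icc_self h2) (h1 (Ioc_subset_Icc_self h2))
    · rw [intervalIntegrable_iff_integrableOn_Icc_of_le hT.le]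
      exact hbint s hs
  · refine Eventually.of_forall fun s hs => ?_
    have hs := hsub hs
    refine intervalIntegral.tendsto_integral_filter_of_dominated_convergence
      (fun t => (|Lk 0 (γ s - γ t)| + L1) * W) ?_ ?_ ?_ ?_
    · refine Eventually.of_forall fun n => ?_
      exact ((hcn n).comp (by fun_prop : Continuous fun t : ℝ => (s, t))).aestronglyMeasurable
    · refine Eventually.of_forall fun n => ?_
      filter_upwards [hne s hs] with t h1 h2
      exact hbd n s hs t (hsub h2) (h1 (hsub h2))
    · rw [intervalIntegrable_iff_integrableOn_Icc_of_le hT.le]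
      exact hbint s hs
    · filter_upwards [hne s hs] with t h1 h2
      exact (Lk_tendsto (h1 (hsub h2)) hlim).mul_const _

lemma main_prod {T : ℝ} (hT : 0 < T) (γ : ℝ → ℝ × ℝ) (hγ : ContDiff ℝ 1 γ)
    (hclosed : γ 0 = γ T) (hinj : InjOn γ (Ico 0 T))
    (hreg : ∀ t ∈ Icc 0 T, deriv γ t ≠ 0)
    (Ω : Set (ℝ × ℝ)) (hΩo : IsOpen Ω) (hΩb : Bornology.IsBounded Ω)
    (hfr : frontier Ω = γ '' Icc 0 T) :
    ∫ s in (0:ℝ)..T, ∫ t in (0:ℝ)..T, Lk 0 (γ s - γ t) *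
      ((deriv γ s).1 * (deriv γ t).1 + (deriv γ s).2 * (deriv γ t).2) =
      - (2 * Real.pi * (volume Ω).toReal) := by
  obtain ⟨j, hj, hgreen⟩ := exists_green hT γ hγ hclosed hinj Ω hΩo hΩb hfr hreg
  set ε : ℕ → ℝ := fun n => 1 / ((n : ℝ) + 1) with hεdef
  have hε : ∀ n, 0 < ε n := fun n => by rw [hεdef]; positivity
  have hε1 : ∀ n, ε n ≤ 1 := fun n => by
    rw [hεdef]
    simp only
    rw [div_le_one (by positivity)]
    linarith [(Nat.cast_nonneg n : (0:ℝ) ≤ n)]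
  have hlim : Tendsto ε atTop (𝓝 0) := tendsto_one_div_add_atTop_nhds_zero_nat
  have hdc : Continuous (deriv γ) := hγ.continuous_deriv (by norm_num)
  have h1 := I_limit hT γ hγ hclosed hinj hreg (fun s t =>
    (deriv γ s).1 * (deriv γ t).1 + (deriv γ s).2 * (deriv γ t).2)
    (by unfold Function.uncurry; fun_prop) ε hε hε1 hlim
  have h2 := (Kk_limit Ω hΩo hΩb ε hε hlim).neg
  refine tendsto_nhds_unique h1 (h2.congr fun n => ?_)
  exact (I_eps hT γ hγ Ω hΩb j hj hgreen (hε n)).symm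

noncomputable def toP : EuclideanSpace ℝ (Fin 2) ≃L[ℝ] ℝ × ℝ :=
  (EuclideanSpace.equiv (Fin 2) ℝ).trans (ContinuousLinearEquiv.finTwoArrow ℝ ℝ)

lemma toP_apply (x : EuclideanSpace ℝ (Fin 2)) : toP x = (x 0, x 1) := rfl

lemma toP_volume (Ω : Set (EuclideanSpace ℝ (Fin 2))) : volume (toP '' Ω) = volume Ω := by
  have h := (volume_preserving_finTwoArrow ℝ).comp
    (EuclideanSpace.volume_preserving_symm_measurableEquiv_toLp (Fin 2))
  have h2 : MeasurePreserving
    (((MeasurableEquiv.toLp 2 (Fin 2 → ℝ)).symm.trans MeasurableEquiv.finTwoArrow) :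
      EuclideanSpace ℝ (Fin 2) ≃ᵐ ℝ × ℝ) volume volume := h
  rw [← h2.measure_preimage_equiv]
  congr 1
  exact preimage_image_eq _ toP.injective

lemma final {T : ℝ} (hT : 0 < T)
    (γ : ℝ → EuclideanSpace ℝ (Fin 2)) (hγ : ContDiff ℝ 1 γ)
    (hclosed : γ 0 = γ T)
    (hinj : Set.InjOn γ (Set.Ico 0 T))
    (hreg : ∀ t ∈ Set.Icc (0:ℝ) T, deriv γ t ≠ 0)
    (Ω : Set (EuclideanSpace ℝ (Fin 2))) (hΩo : IsOpen Ω) (hΩb : Bornology.IsBounded Ω)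
    (hfr : frontier Ω = γ '' Set.Icc 0 T) :
    (∫ s in (0:ℝ)..T, ∫ t in (0:ℝ)..T,
        Real.log ‖γ s - γ t‖ * ⟪deriv γ s, deriv γ t⟫) =
      -(2 * Real.pi) * (volume Ω).toReal := by
  have hd : ∀ t, deriv (fun t => toP (γ t)) t = toP (deriv γ t) := by
    intro t
    have h1 : HasDerivAt γ (deriv γ t) t := (hγ.differentiable (by norm_num) t).hasDerivAt
    exact (toP.toContinuousLinearMap.hasFDerivAt.comp_hasDerivAt t h1).deriv
  have key := main_prod hT (fun t => toP (γ t)) (toP.contDiff.comp hγ) (by simp only [hclosed])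
    (fun a ha b hb hab => hinj ha hb (toP.injective hab))
    (fun t ht => by
      rw [hd]
      exact fun h => hreg t ht (toP.injective (by rw [h, map_zero])))
    (toP '' Ω) (toP.toHomeomorph.isOpenMap _ hΩo)
    (toP.toContinuousLinearMap.lipschitz.isBounded_image hΩb)
    (by
      have := toP.toHomeomorph.image_frontier Ω
      rw [hfr, image_image] at this
      exact this.symm)
  rw [toP_volume] at key
  rw [neg_mul, ← key]
  refine intervalIntegral.integral_congr fun s _ => intervalIntegral.integral_congr fun t _ => ?_
  simp only [hd]
  rw [← map_sub]
  simp only [toP_apply]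
  congr 1
  · rw [EuclideanSpace.norm_eq, Real.log_sqrt (by positivity)]
    simp only [Lk, Fin.sum_univ_two, Real.norm_eq_abs, sq_abs]
    ring_nf
  · simp [PiLp.inner_apply, Fin.sum_univ_two]
    ring

/-- Let `γ : [0, 2π] → ℝ²` be a C¹ simple closed curve enclosing the
bounded region `Ω`.  Then
`∫₀^{2π} ∫₀^{2π} log ‖γ(s) − γ(t)‖ ⟨γ'(s), γ'(t)⟩ ds dt = −2π · area(Ω)`. -/
theorem statement18
    (γ : ℝ → E2) (hγ : ContDiff ℝ 1 γ)
    (hclosed : γ 0 = γ (2 * Real.pi))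
    (hinj : Set.InjOn γ (Set.Ico 0 (2 * Real.pi)))
    (hreg : ∀ t ∈ Set.Icc (0:ℝ) (2 * Real.pi), deriv γ t ≠ 0)
    (Ω : Set E2) (hΩo : IsOpen Ω) (hΩb : Bornology.IsBounded Ω)
    (hfr : frontier Ω = γ '' Set.Icc 0 (2 * Real.pi)) :
    (∫ s in (0:ℝ)..(2 * Real.pi), ∫ t in (0:ℝ)..(2 * Real.pi),
        Real.log ‖γ s - γ t‖ * ⟪deriv γ s, deriv γ t⟫) =
      -(2 * Real.pi) * (volume Ω).toReal := by
  exact final (by positivity) γ hγ hclosed hinj hreg Ω hΩo hΩb hfr
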